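/- arXiv:2508.15319 — 3 statements merged into one kernel-verified Lean document; each statement's English description precedes it below -/
import Mathlib

section
/- Let n ≥ 1 be an integer and let m : ℝ → ℝ be an increasing solution of m'' + m − m^{2n+1} = 0 with m(0) = 0 and m(x) → ±1 as x → ±∞. There exist constants c, C > 0 (depending only on n) such that the following holds: if v : ℝ → ℝ is bounded and continuous, and u : [0,∞) × ℝ → ℝ is continuous, bounded on [0,T] × ℝ for every T > 0, satisfies u(0,·) = v, and on (0,∞) × ℝ is once continuously differentiable in t and twice continuously differentiable in x with ∂_t u(t,x) = ∂_x² u(t,x) + (1 − (2n+1)·m(x)^{2n})·u(t,x), then for all t ≥ 0 and all x ∈ ℝ, |u(t,x) − (∫_ℝ v(y)·m'(y) dy / ∫_ℝ m'(y)² dy)·m'(x)| ≤ C·e^{−ct}·sup_{y∈ℝ}|v(y)|. -/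
open Filter MeasureTheory

/-- An increasing heteroclinic solution of `m'' + m - m ^ (2 * n + 1) = 0` joining `-1` to `1`. -/
structure IsKink (n : ℕ) (m : ℝ → ℝ) : Prop where
  one_le : 1 ≤ n
  contDiff : ContDiff ℝ 2 m
  strictMono : StrictMono m
  eq : ∀ x : ℝ, deriv (deriv m) x + m x - m x ^ (2 * n + 1) = 0
  map_zero : m 0 = 0
  tendsto_atTop : Tendsto m atTop (nhds 1)
  tendsto_atBot : Tendsto m atBot (nhds (-1))

/-- The potential `f_n'(m)` of the linearized Allen–Cahn operator. -/
noncomputable def kinkPotential (n : ℕ) (m : ℝ → ℝ) (x : ℝ) : ℝ :=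
  1 - (2 * (n : ℝ) + 1) * m x ^ (2 * n)

/-- A function integrable on the positive half line together with its reflection is integrable. -/
theorem integrable_of_integrableOn_Ioi_reflect {f : ℝ → ℝ}
    (h1 : IntegrableOn f (Set.Ioi 0)) (h2 : IntegrableOn (fun x => f (-x)) (Set.Ioi 0)) :
    Integrable f := by
  rw [← integrableOn_univ, ← Set.Iic_union_Ioi (a := (0 : ℝ))]
  refine IntegrableOn.union ?_ h1
  rw [integrableOn_Iic_iff_integrableOn_Iio]
  have := h2.comp_neg
  simpa using this

namespace IsKink

variable {n : ℕ} {m : ℝ → ℝ}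

theorem hasDerivAt (h : IsKink n m) (x : ℝ) : HasDerivAt m (deriv m x) x :=
  (h.contDiff.differentiable (by norm_num) x).hasDerivAt

theorem hasDerivAt_deriv (h : IsKink n m) (x : ℝ) :
    HasDerivAt (deriv m) (m x ^ (2 * n + 1) - m x) x := by
  have h1 : Differentiable ℝ (deriv m) :=
    (((contDiff_succ_iff_deriv (n := 1)).1
      (show ContDiff ℝ (1 + 1) m from h.contDiff.of_le (by norm_num))).2.2).differentiable
      (by norm_num)
  have h2 := (h1 x).hasDerivAt
  rwa [show deriv (deriv m) x = m x ^ (2 * n + 1) - m x by linarith [h.eq x]] at h2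

theorem continuous (h : IsKink n m) : Continuous m := h.contDiff.continuous

theorem continuous_deriv (h : IsKink n m) : Continuous (deriv m) :=
  continuous_iff_continuousAt.2 fun x => (h.hasDerivAt_deriv x).continuousAt

theorem deriv_reflect (h : IsKink n m) (x : ℝ) : deriv (fun x => -m (-x)) x = deriv m (-x) := by
  have := ((h.hasDerivAt (-x)).comp x (hasDerivAt_neg x)).neg
  simpa [Function.comp_def] using this.deriv

theorem reflect (h : IsKink n m) : IsKink n (fun x => -m (-x)) := by
  have hd : deriv (fun x => -m (-x)) = fun x => deriv m (-x) := funext h.deriv_reflect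
  have hdd : deriv (deriv (fun x => -m (-x))) = fun x => -(m (-x) ^ (2 * n + 1) - m (-x)) := by
    rw [hd]
    funext x
    have := (h.hasDerivAt_deriv (-x)).comp x (hasDerivAt_neg x)
    simpa [Function.comp_def] using this.deriv
  refine ⟨h.one_le, (h.contDiff.comp contDiff_neg).neg, ?_, ?_, by simp [h.map_zero], ?_, ?_⟩
  · intro x y hxy
    have := h.strictMono (neg_lt_neg hxy)
    simpa using this
  · intro x
    rw [hdd, Odd.neg_pow ⟨n, rfl⟩]
    ring
  · have := (h.tendsto_atBot.comp tendsto_neg_atTop_atBot).neg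
    simpa [Function.comp_def] using this
  · have := (h.tendsto_atTop.comp tendsto_neg_atBot_atTop).neg
    simpa [Function.comp_def] using this

theorem lt_one (h : IsKink n m) (x : ℝ) : m x < 1 :=
  (h.strictMono (lt_add_one x)).trans_le (h.strictMono.monotone.ge_of_tendsto h.tendsto_atTop _)

theorem neg_one_lt (h : IsKink n m) (x : ℝ) : -1 < m x := by
  have := h.reflect.lt_one (-x)
  simp only [neg_neg] at this
  linarith

theorem sq_lt_one (h : IsKink n m) (x : ℝ) : m x ^ 2 < 1 := by
  nlinarith [h.lt_one x, h.neg_one_lt x]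

theorem pow_lt_one (h : IsKink n m) (x : ℝ) : m x ^ (2 * n) < 1 := by
  rw [pow_mul]
  exact pow_lt_one₀ (sq_nonneg _) (h.sq_lt_one x) (by have := h.one_le; omega)

theorem strictAntiOn_deriv (h : IsKink n m) : StrictAntiOn (deriv m) (Set.Ici 0) := by
  refine strictAntiOn_of_deriv_neg (convex_Ici 0) h.continuous_deriv.continuousOn fun x hx => ?_
  rw [interior_Ici] at hx
  rw [(h.hasDerivAt_deriv x).deriv]
  have h1 : 0 < m x := by simpa [h.map_zero] using h.strictMono hx
  have h2 := h.pow_lt_one x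
  rw [pow_succ]
  nlinarith

theorem deriv_pos (h : IsKink n m) (x : ℝ) : 0 < deriv m x := by
  have key : ∀ {k : ℝ → ℝ}, IsKink n k → ∀ x, 0 ≤ x → 0 < deriv k x := by
    intro k hk x hx
    have h1 : 0 ≤ deriv k (x + 1) := hk.strictMono.monotone.deriv_nonneg
    exact h1.trans_lt (hk.strictAntiOn_deriv (by simpa using hx)
      (by simp only [Set.mem_Ici]; linarith) (lt_add_one x))
  rcases le_total 0 x with hx | hx
  · exact key h x hx
  · have := key h.reflect (-x) (by linarith)
    rwa [h.deriv_reflect, neg_neg] at this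

theorem deriv_le (h : IsKink n m) (x : ℝ) : deriv m x ≤ deriv m 0 := by
  have key : ∀ {k : ℝ → ℝ}, IsKink n k → ∀ x, 0 ≤ x → deriv k x ≤ deriv k 0 :=
    fun hk x hx => hk.strictAntiOn_deriv.antitoneOn Set.self_mem_Ici hx hx
  rcases le_total 0 x with hx | hx
  · exact key h x hx
  · have := key h.reflect (-x) (by linarith)
    rwa [h.deriv_reflect, h.deriv_reflect, neg_neg, neg_zero] at this

theorem integrableOn_Ioi_deriv (h : IsKink n m) : IntegrableOn (deriv m) (Set.Ioi 0) :=
  integrableOn_Ioi_deriv_of_nonneg' (fun x _ => h.hasDerivAt x) (fun x _ => (h.deriv_pos x).le)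
    h.tendsto_atTop

theorem integrableOn_Ioi_second (h : IsKink n m) :
    IntegrableOn (fun x => m x ^ (2 * n + 1) - m x) (Set.Ioi 0) := by
  have hlim : ∃ l, Tendsto (deriv m) atTop (nhds l) := by
    have hanti : Antitone fun x => deriv m (max x 0) := fun x y hxy =>
      h.strictAntiOn_deriv.antitoneOn (Set.mem_Ici.2 (le_max_right x 0))
        (Set.mem_Ici.2 (le_max_right y 0))
        (max_le_max_right 0 hxy)
    have := tendsto_atTop_ciInf hanti ⟨0, by rintro _ ⟨x, rfl⟩; exact (h.deriv_pos _).le⟩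
    refine ⟨_, this.congr' ?_⟩
    filter_upwards [eventually_ge_atTop 0] with x hx
    rw [max_eq_left hx]
  obtain ⟨l, hl⟩ := hlim
  refine integrableOn_Ioi_deriv_of_nonpos' (fun x _ => h.hasDerivAt_deriv x) (fun x hx => ?_) hl
  have h1 : 0 < m x := by simpa [h.map_zero] using h.strictMono hx
  have h2 := h.pow_lt_one x
  rw [pow_succ]
  nlinarith

theorem tendsto_deriv_atTop (h : IsKink n m) : Tendsto (deriv m) atTop (nhds 0) :=
  tendsto_zero_of_hasDerivAt_of_integrableOn_Ioi (fun x _ => h.hasDerivAt_deriv x)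
    h.integrableOn_Ioi_second h.integrableOn_Ioi_deriv

theorem tendsto_deriv_atBot (h : IsKink n m) : Tendsto (deriv m) atBot (nhds 0) := by
  have := h.reflect.tendsto_deriv_atTop.comp tendsto_neg_atBot_atTop
  refine this.congr fun x => ?_
  rw [Function.comp_apply, h.deriv_reflect, neg_neg]

theorem integrable_deriv (h : IsKink n m) : Integrable (deriv m) := by
  refine integrable_of_integrableOn_Ioi_reflect h.integrableOn_Ioi_deriv ?_
  have := h.reflect.integrableOn_Ioi_deriv
  exact this.congr_fun (fun x _ => h.deriv_reflect x) measurableSet_Ioi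

theorem integrable_second (h : IsKink n m) :
    Integrable fun x => m x ^ (2 * n + 1) - m x := by
  refine integrable_of_integrableOn_Ioi_reflect h.integrableOn_Ioi_second ?_
  have := h.reflect.integrableOn_Ioi_second.neg
  refine this.congr_fun (fun x _ => ?_) measurableSet_Ioi
  simp only [Pi.neg_apply]
  rw [Odd.neg_pow ⟨n, rfl⟩]
  ring

theorem hasDerivAt_second (h : IsKink n m) (x : ℝ) :
    HasDerivAt (fun x => m x ^ (2 * n + 1) - m x) (-kinkPotential n m x * deriv m x) x := by
  refine (((h.hasDerivAt x).fun_pow (2 * n + 1)).sub (h.hasDerivAt x)).congr_deriv ?_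
  simp only [kinkPotential, Nat.add_sub_cancel]
  push_cast
  ring

theorem continuous_potential (h : IsKink n m) : Continuous (kinkPotential n m) :=
  continuous_const.sub (continuous_const.mul (h.continuous.pow _))

theorem potential_le_one (m : ℝ → ℝ) (x : ℝ) : kinkPotential n m x ≤ 1 := by
  have : 0 ≤ m x ^ (2 * n) := by rw [pow_mul]; positivity
  have h2 : (0 : ℝ) ≤ n := n.cast_nonneg
  simp only [kinkPotential]
  nlinarith [mul_nonneg h2 this]

theorem tendsto_potential_atTop (h : IsKink n m) :
    Tendsto (kinkPotential n m) atTop (nhds (-(2 * n))) := by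
  have : Tendsto (kinkPotential n m) atTop (nhds (1 - (2 * (n : ℝ) + 1) * 1 ^ (2 * n))) :=
    ((h.tendsto_atTop.pow (2 * n)).const_mul (2 * (n : ℝ) + 1)).const_sub 1
  convert this using 2
  simp

theorem potential_reflect (n : ℕ) (m : ℝ → ℝ) (x : ℝ) :
    kinkPotential n (fun x => -m (-x)) x = kinkPotential n m (-x) := by
  simp [kinkPotential, pow_mul]

theorem tendsto_potential_atBot (h : IsKink n m) :
    Tendsto (kinkPotential n m) atBot (nhds (-(2 * n))) := by
  have := h.reflect.tendsto_potential_atTop.comp tendsto_neg_atBot_atTop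
  refine this.congr fun x => ?_
  simp [potential_reflect]

/-- The derivative `m'` is log-concave. -/
theorem logConcave (h : IsKink n m) (x : ℝ) :
    -kinkPotential n m x * deriv m x ^ 2 - (m x ^ (2 * n + 1) - m x) ^ 2 ≤ 0 := by
  have key : ∀ {k : ℝ → ℝ}, IsKink n k → ∀ x, 0 ≤ x →
      -kinkPotential n k x * deriv k x ^ 2 - (k x ^ (2 * n + 1) - k x) ^ 2 ≤ 0 := by
    intro k hk x hx
    set G : ℝ → ℝ := fun x =>
      -kinkPotential n k x * deriv k x ^ 2 - (k x ^ (2 * n + 1) - k x) ^ 2 with hG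
    have hd : ∀ x, HasDerivAt G
        ((2 * (n : ℝ) + 1) * (2 * n * k x ^ (2 * n - 1)) * deriv k x ^ 3) x := by
      intro x
      have hV : HasDerivAt (kinkPotential n k)
          (-((2 * (n : ℝ) + 1) * (2 * n * k x ^ (2 * n - 1) * deriv k x))) x := by
        have := (((hk.hasDerivAt x).fun_pow (2 * n)).const_mul (2 * (n : ℝ) + 1)).const_sub 1
        refine this.congr_deriv ?_
        push_cast
        ring
      refine ((hV.neg.mul ((hk.hasDerivAt_deriv x).fun_pow 2)).sub
        ((hk.hasDerivAt_second x).fun_pow 2)).congr_deriv ?_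
      simp only [Pi.neg_apply]
      push_cast
      ring
    have hmono : MonotoneOn G (Set.Ici 0) := by
      refine monotoneOn_of_deriv_nonneg (convex_Ici 0)
        (fun x _ => (hd x).continuousAt.continuousWithinAt)
        (fun x _ => (hd x).differentiableAt.differentiableWithinAt) fun x hx => ?_
      rw [interior_Ici] at hx
      rw [(hd x).deriv]
      have h1 : 0 < k x := by simpa [hk.map_zero] using hk.strictMono hx
      have h2 := hk.deriv_pos x
      positivity
    have hlim : Tendsto G atTop (nhds 0) := by
      have h1 := ((hk.tendsto_potential_atTop.neg).mul (hk.tendsto_deriv_atTop.pow 2)).sub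
        (((hk.tendsto_atTop.pow (2 * n + 1)).sub hk.tendsto_atTop).pow 2)
      simpa [hG] using h1
    refine ge_of_tendsto hlim ?_
    filter_upwards [eventually_ge_atTop x] with y hy
    exact hmono hx (hx.trans hy) hy
  rcases le_total 0 x with hx | hx
  · exact key h x hx
  · have := key h.reflect (-x) (by linarith)
    rw [h.deriv_reflect, potential_reflect, neg_neg, Odd.neg_pow ⟨n, rfl⟩] at this
    nlinarith

theorem wronskian_nonpos (h : IsKink n m) {x y : ℝ} (hyx : y ≤ x) :
    (m x ^ (2 * n + 1) - m x) * deriv m y - deriv m x * (m y ^ (2 * n + 1) - m y) ≤ 0 := by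
  have hanti : Antitone fun x => (m x ^ (2 * n + 1) - m x) / deriv m x := by
    have hd := fun x => (h.hasDerivAt_second x).fun_div (h.hasDerivAt_deriv x) (h.deriv_pos x).ne'
    refine antitone_of_deriv_nonpos (fun x => (hd x).differentiableAt) fun x => ?_
    rw [(hd x).deriv]
    refine div_nonpos_of_nonpos_of_nonneg ?_ (sq_nonneg _)
    nlinarith [h.logConcave x]
  have := hanti hyx
  simp only at this
  rw [div_le_div_iff₀ (h.deriv_pos x) (h.deriv_pos y)] at this
  linarith

end IsKink

namespace IsKink

variable {n : ℕ} {m : ℝ → ℝ}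

theorem tendsto_potential_div_deriv (h : IsKink n m) :
    Tendsto (fun x => (kinkPotential n m x + 1) / deriv m x) (cocompact ℝ) atBot := by
  have hn : -(2 * (n : ℝ)) + 1 < 0 := by
    have : (1 : ℝ) ≤ n := by exact_mod_cast h.one_le
    linarith
  have key : ∀ l : Filter ℝ, Tendsto (deriv m) l (nhds 0) →
      Tendsto (kinkPotential n m) l (nhds (-(2 * n))) →
      Tendsto (fun x => (kinkPotential n m x + 1) / deriv m x) l atBot := by
    intro l h1 h2
    have h3 : Tendsto (fun x => (deriv m x)⁻¹) l atTop :=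
      tendsto_inv_nhdsGT_zero.comp
        (tendsto_nhdsWithin_iff.2 ⟨h1, Eventually.of_forall fun x => h.deriv_pos x⟩)
    exact (h2.add_const 1).neg_mul_atTop hn h3
  rw [cocompact_eq_atBot_atTop, tendsto_sup]
  exact ⟨key _ h.tendsto_deriv_atBot h.tendsto_potential_atBot,
    key _ h.tendsto_deriv_atTop h.tendsto_potential_atTop⟩

theorem exists_supersolution_bound (h : IsKink n m) :
    ∃ K ≥ (0 : ℝ), ∃ c > (0 : ℝ), ∀ x y : ℝ,
      kinkPotential n m x * deriv m y + kinkPotential n m y * deriv m x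
          - 2 * K * Real.exp (y - x) * (deriv m x * deriv m y)
        ≤ -c * (K * (deriv m x * deriv m y) + deriv m x + deriv m y) := by
  set g : ℝ → ℝ := fun x => (kinkPotential n m x + 1) / deriv m x with hg
  have hgc : Continuous g :=
    (h.continuous_potential.add continuous_const).div h.continuous_deriv
      fun x => (h.deriv_pos x).ne'
  obtain ⟨x₀, hx₀⟩ := hgc.exists_forall_ge h.tendsto_potential_div_deriv
  set A := max (g x₀) 0
  have hA : ∀ x, g x ≤ A := fun x => (hx₀ x).trans (le_max_left _ _)
  have hA0 : 0 ≤ A := le_max_right _ _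
  obtain ⟨R, hR⟩ : ∃ R, ∀ x, R < |x| → g x ≤ -1 - A := by
    have h1 := h.tendsto_potential_div_deriv.eventually_le_atBot (-1 - A)
    rw [cocompact_eq_atBot_atTop, eventually_sup, eventually_atBot, eventually_atTop] at h1
    obtain ⟨⟨a, ha⟩, b, hb⟩ := h1
    refine ⟨max |a| |b|, fun x hx => ?_⟩
    obtain ⟨hax, hbx⟩ := max_lt_iff.1 hx
    rcases le_total 0 x with hx0 | hx0
    · rw [abs_of_nonneg hx0] at hbx
      exact hb x ((le_abs_self b).trans hbx.le)
    · rw [abs_of_nonpos hx0] at hax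
      exact ha x (by linarith [neg_abs_le a])
  set K := (2 * A + 1) * Real.exp (2 * R) / 2
  have hK : 0 ≤ K := by positivity
  have hsum : ∀ x y, g x + g y - 2 * K * Real.exp (y - x) ≤ -1 := by
    intro x y
    have hpos : 0 ≤ 2 * K * Real.exp (y - x) := by positivity
    by_cases hx : R < |x|
    · linarith [hR x hx, hA y]
    by_cases hy : R < |y|
    · linarith [hR y hy, hA x]
    push Not at hx hy
    have h1 : 1 ≤ Real.exp (2 * R) * Real.exp (y - x) := by
      rw [← Real.exp_add]
      exact Real.one_le_exp (by linarith [le_abs_self x, neg_abs_le y])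
    have h2 : 2 * K * Real.exp (y - x)
        = (2 * A + 1) * (Real.exp (2 * R) * Real.exp (y - x)) := by
      simp only [K]; ring
    rw [h2]
    nlinarith [hA x, hA y]
  refine ⟨K, hK, 1 / (K + 1), by positivity, fun x y => ?_⟩
  have hx := h.deriv_pos x
  have hy := h.deriv_pos y
  have h1 := mul_le_mul_of_nonneg_right (hsum x y) (mul_pos hx hy).le
  have h2 : (g x + g y - 2 * K * Real.exp (y - x)) * (deriv m x * deriv m y)
      = (kinkPotential n m x + 1) * deriv m y + (kinkPotential n m y + 1) * deriv m x
        - 2 * K * Real.exp (y - x) * (deriv m x * deriv m y) := by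
    simp only [hg]
    field_simp
  rw [h2] at h1
  have hc1 : 1 / (K + 1) ≤ 1 := by rw [div_le_one (by positivity)]; linarith
  have hc2 : 1 / (K + 1) * K ≤ 1 := by
    rw [div_mul_eq_mul_div, one_mul, div_le_one (by positivity)]; linarith
  nlinarith [mul_le_mul_of_nonneg_right hc1 hx.le, mul_le_mul_of_nonneg_right hc1 hy.le,
    mul_le_mul_of_nonneg_right hc2 (mul_pos hx hy).le]

end IsKink

theorem second_deriv_nonneg_of_isLocalMin {f f' : ℝ → ℝ} {a f'' : ℝ} (h : IsLocalMin f a)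
    (hf : ∀ x, HasDerivAt f (f' x) x) (hf' : HasDerivAt f' f'' a) : 0 ≤ f'' := by
  by_contra! hneg
  have hd : deriv f = f' := funext fun x => (hf x).deriv
  have hmax : IsLocalMax f a := by
    refine isLocalMax_of_deriv_deriv_neg (by rwa [hd, hf'.deriv]) h.deriv_eq_zero
      (hf a).continuousAt
  have hconst : f =ᶠ[nhds a] fun _ => f a := by
    filter_upwards [h, hmax] with x h1 h2 using le_antisymm h2 h1
  have hzero : f' =ᶠ[nhds a] fun _ => 0 := by
    filter_upwards [hconst.eventually_nhds] with x hx
    rw [← hd, EventuallyEq.deriv_eq hx, deriv_const]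
  have : f'' = 0 := by rw [← hf'.deriv, hzero.deriv_eq, deriv_const]
  exact hneg.ne this

theorem deriv_nonpos_of_forall_Icc_ge {f : ℝ → ℝ} {t f' : ℝ} (ht : 0 < t)
    (h : ∀ s ∈ Set.Icc 0 t, f t ≤ f s) (hf : HasDerivAt f f' t) : f' ≤ 0 := by
  have h1 := (hasDerivWithinAt_iff_tendsto_slope' (s := Set.Iio t) (by simp)).1 hf.hasDerivWithinAt
  refine le_of_tendsto h1 ?_
  filter_upwards [Ioo_mem_nhdsLT ht] with s hs
  rw [slope_def_field]
  exact div_nonpos_of_nonneg_of_nonpos (by linarith [h s ⟨hs.1.le, hs.2.le⟩]) (by linarith [hs.2])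

/-- Minimum principle for a parabolic inequality in two space variables, on the half plane
`y ≤ x`. -/
theorem parabolic_min_principle {q qt qx qxx qy qyy : ℝ → ℝ → ℝ → ℝ} {W : ℝ → ℝ → ℝ} {T R : ℝ}
    (hc : ContinuousOn (fun p : ℝ × ℝ × ℝ => q p.1 p.2.1 p.2.2) {p | 0 ≤ p.1})
    (hW : ∀ x y, W x y < 0)
    (h0 : ∀ x y, y ≤ x → 0 ≤ q 0 x y)
    (hdiag : ∀ t ∈ Set.Icc 0 T, ∀ x, 0 ≤ q t x x)
    (hR : ∀ t ∈ Set.Icc 0 T, ∀ x y, y ≤ x → R < |x| ∨ R < |y| → 0 ≤ q t x y)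
    (hqt : ∀ t, 0 < t → ∀ x y, HasDerivAt (fun s => q s x y) (qt t x y) t)
    (hqx : ∀ t, 0 < t → ∀ x y, HasDerivAt (fun x' => q t x' y) (qx t x y) x)
    (hqxx : ∀ t, 0 < t → ∀ x y, HasDerivAt (fun x' => qx t x' y) (qxx t x y) x)
    (hqy : ∀ t, 0 < t → ∀ x y, HasDerivAt (fun y' => q t x y') (qy t x y) y)
    (hqyy : ∀ t, 0 < t → ∀ x y, HasDerivAt (fun y' => qy t x y') (qyy t x y) y)
    (hineq : ∀ t, 0 < t → ∀ x y, y < x →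
      qxx t x y + qyy t x y + W x y * q t x y ≤ qt t x y) :
    ∀ t ∈ Set.Icc 0 T, ∀ x y, y ≤ x → 0 ≤ q t x y := by
  by_contra! hcon
  obtain ⟨t₁, ht₁, x₁, y₁, hyx₁, hq₁⟩ := hcon
  set S : Set (ℝ × ℝ × ℝ) :=
    (Set.Icc 0 T ×ˢ (Set.Icc (-R) R ×ˢ Set.Icc (-R) R)) ∩ {p | p.2.2 ≤ p.2.1} with hS
  have hScomp : IsCompact S :=
    (isCompact_Icc.prod (isCompact_Icc.prod isCompact_Icc)).inter_right
      (isClosed_le (by fun_prop) (by fun_prop))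
  have hmemS : ∀ t ∈ Set.Icc 0 T, ∀ x y, y ≤ x → q t x y < 0 → (t, x, y) ∈ S := by
    intro t ht x y hyx hq
    have : ¬ (R < |x| ∨ R < |y|) := fun hxy => absurd (hR t ht x y hyx hxy) (not_le.2 hq)
    push Not at this
    exact ⟨⟨ht, abs_le.1 this.1, abs_le.1 this.2⟩, hyx⟩
  obtain ⟨⟨t, x, y⟩, hmem, hmin⟩ := hScomp.exists_isMinOn ⟨_, hmemS t₁ ht₁ x₁ y₁ hyx₁ hq₁⟩
    (hc.mono fun p hp => hp.1.1.1)
  have hneg : q t x y < 0 := (hmin (hmemS t₁ ht₁ x₁ y₁ hyx₁ hq₁)).trans_lt hq₁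
  have hglob : ∀ s ∈ Set.Icc 0 T, ∀ a b, b ≤ a → q t x y ≤ q s a b := by
    intro s hs a b hba
    rcases lt_or_ge (q s a b) 0 with hlt | hge
    · exact hmin (hmemS s hs a b hba hlt)
    · exact hneg.le.trans hge
  have htT : t ∈ Set.Icc 0 T := hmem.1.1
  have hyx : y ≤ x := hmem.2
  have ht0 : 0 < t := by
    refine htT.1.lt_of_ne fun h => ?_
    subst h
    exact absurd (h0 x y hyx) (not_le.2 hneg)
  have hlt : y < x := by
    refine hyx.lt_of_ne fun h => ?_
    subst h
    exact absurd (hdiag t htT y) (not_le.2 hneg)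
  have hxmin : IsLocalMin (fun x' => q t x' y) x := by
    filter_upwards [lt_mem_nhds hlt] with x' hx' using hglob t htT x' y hx'.le
  have hymin : IsLocalMin (fun y' => q t x y') y := by
    filter_upwards [gt_mem_nhds hlt] with y' hy' using hglob t htT x y' hy'.le
  have h1 := second_deriv_nonneg_of_isLocalMin hxmin (fun x' => hqx t ht0 x' y) (hqxx t ht0 x y)
  have h2 := second_deriv_nonneg_of_isLocalMin hymin (fun y' => hqy t ht0 x y') (hqyy t ht0 x y)
  have h3 := deriv_nonpos_of_forall_Icc_ge ht0
    (fun s hs => hglob s ⟨hs.1, hs.2.trans htT.2⟩ x y hyx) (hqt t ht0 x y)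
  have h4 := mul_pos_of_neg_of_neg (hW x y) hneg
  linarith [hineq t ht0 x y hlt]

/-- Classical solutions of `∂ₜ u = ∂ₓ² u + V u` that are bounded on `[0, T] × ℝ` for every `T`. -/
structure IsClassicalSolution (V : ℝ → ℝ) (u ut ux uxx : ℝ → ℝ → ℝ) : Prop where
  continuousOn : ContinuousOn (fun p : ℝ × ℝ => u p.1 p.2) {p : ℝ × ℝ | 0 ≤ p.1}
  bounded : ∀ T > (0 : ℝ), ∃ M : ℝ, ∀ t ∈ Set.Icc (0 : ℝ) T, ∀ x : ℝ, |u t x| ≤ M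
  continuousOn_ut : ContinuousOn (fun p : ℝ × ℝ => ut p.1 p.2) {p : ℝ × ℝ | 0 < p.1}
  continuousOn_uxx : ContinuousOn (fun p : ℝ × ℝ => uxx p.1 p.2) {p : ℝ × ℝ | 0 < p.1}
  hasDerivAt_t : ∀ t, 0 < t → ∀ x, HasDerivAt (fun s => u s x) (ut t x) t
  hasDerivAt_x : ∀ t, 0 < t → ∀ x, HasDerivAt (fun y => u t y) (ux t x) x
  hasDerivAt_xx : ∀ t, 0 < t → ∀ x, HasDerivAt (fun y => ux t y) (uxx t x) x
  eq : ∀ t, 0 < t → ∀ x, ut t x = uxx t x + V x * u t x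

namespace IsClassicalSolution

variable {V : ℝ → ℝ} {u ut ux uxx : ℝ → ℝ → ℝ}

theorem neg (h : IsClassicalSolution V u ut ux uxx) :
    IsClassicalSolution V (fun t x => -u t x) (fun t x => -ut t x) (fun t x => -ux t x)
      (fun t x => -uxx t x) where
  continuousOn := h.continuousOn.neg
  bounded T hT := by simpa using h.bounded T hT
  continuousOn_ut := h.continuousOn_ut.neg
  continuousOn_uxx := h.continuousOn_uxx.neg
  hasDerivAt_t t ht x := (h.hasDerivAt_t t ht x).neg
  hasDerivAt_x t ht x := (h.hasDerivAt_x t ht x).neg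
  hasDerivAt_xx t ht x := (h.hasDerivAt_xx t ht x).neg
  eq t ht x := by rw [h.eq t ht x]; ring

theorem continuous_slice (h : IsClassicalSolution V u ut ux uxx) {t : ℝ} (ht : 0 ≤ t) :
    Continuous (u t) :=
  h.continuousOn.comp_continuous (f := fun x => (t, x)) (by fun_prop) fun _ => ht

theorem continuous_ut_slice (h : IsClassicalSolution V u ut ux uxx) {t : ℝ} (ht : 0 < t) :
    Continuous (ut t) :=
  h.continuousOn_ut.comp_continuous (f := fun x => (t, x)) (by fun_prop) fun _ => ht

theorem continuous_uxx_slice (h : IsClassicalSolution V u ut ux uxx) {t : ℝ} (ht : 0 < t) :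
    Continuous (uxx t) :=
  h.continuousOn_uxx.comp_continuous (f := fun x => (t, x)) (by fun_prop) fun _ => ht

end IsClassicalSolution

namespace IsKink

variable {n : ℕ} {m : ℝ → ℝ} {u ut ux uxx : ℝ → ℝ → ℝ}

theorem two_point_upper_bound (h : IsKink n m) {K c : ℝ} (hK : 0 ≤ K)
    (hsuper : ∀ x y : ℝ,
      kinkPotential n m x * deriv m y + kinkPotential n m y * deriv m x
          - 2 * K * Real.exp (y - x) * (deriv m x * deriv m y)
        ≤ -c * (K * (deriv m x * deriv m y) + deriv m x + deriv m y)) (hc : 0 ≤ c)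
    (hu : IsClassicalSolution (kinkPotential n m) u ut ux uxx) {B : ℝ}
    (hB : ∀ x, |u 0 x| ≤ B) {t : ℝ} (ht : 0 ≤ t) {x y : ℝ} (hyx : y ≤ x) :
    u t x * deriv m y - u t y * deriv m x
      ≤ B * Real.exp (-c * t) * (K * (deriv m x * deriv m y) + deriv m x + deriv m y) := by
  have hB0 : 0 ≤ B := (abs_nonneg _).trans (hB 0)
  set φ := deriv m with hφ
  set φ' : ℝ → ℝ := fun x => m x ^ (2 * n + 1) - m x with hφ'
  set V := kinkPotential n m with hV
  have hpos : ∀ x, 0 < φ x := h.deriv_pos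
  have hd : ∀ x, HasDerivAt φ (φ' x) x := h.hasDerivAt_deriv
  have hd' : ∀ x, HasDerivAt φ' (-V x * φ x) x := h.hasDerivAt_second
  set Φ : ℝ → ℝ → ℝ := fun x y => K * (1 - Real.exp (y - x)) * (φ x * φ y) + φ x + φ y with hΦ
  have hΦlow : ∀ x y, y ≤ x → φ x + φ y ≤ Φ x y := by
    intro x y hyx
    have h1 : Real.exp (y - x) ≤ 1 := Real.exp_le_one_iff.2 (by linarith)
    have h2 := mul_nonneg (mul_nonneg hK (sub_nonneg.2 h1)) (mul_pos (hpos x) (hpos y)).le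
    simp only [hΦ]
    linarith
  have hΦup : ∀ x y, Φ x y ≤ K * (φ x * φ y) + φ x + φ y := by
    intro x y
    have := mul_nonneg (mul_nonneg hK (Real.exp_pos (y - x)).le) (mul_pos (hpos x) (hpos y)).le
    simp only [hΦ]
    nlinarith
  have hΦc : Continuous fun p : ℝ × ℝ => Φ p.1 p.2 := by
    have := h.continuous_deriv
    simp only [hΦ]
    fun_prop
  suffices H : ∀ ε > 0, 0 ≤ B * Φ x y * Real.exp (-(c + 6) * t) + ε * (1 + x ^ 2 + y ^ 2)
      - Real.exp (-6 * t) * (u t x * φ y - u t y * φ x) by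
    have h1 : 0 ≤ B * Φ x y * Real.exp (-(c + 6) * t)
        - Real.exp (-6 * t) * (u t x * φ y - u t y * φ x) := by
      refine le_of_forall_pos_le_add fun δ hδ => ?_
      have h2 : 0 < 1 + x ^ 2 + y ^ 2 := by positivity
      have h3 := H (δ / (1 + x ^ 2 + y ^ 2)) (by positivity)
      rw [div_mul_cancel₀ _ h2.ne'] at h3
      linarith
    have h2 : Real.exp (-(c + 6) * t) = Real.exp (-c * t) * Real.exp (-6 * t) := by
      rw [← Real.exp_add]; ring_nf
    rw [h2] at h1
    have h3 : 0 ≤ Real.exp (-6 * t)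
        * (B * Real.exp (-c * t) * Φ x y - (u t x * φ y - u t y * φ x)) := by linarith
    have h4 := nonneg_of_mul_nonneg_right h3 (Real.exp_pos _)
    have h5 : 0 ≤ B * Real.exp (-c * t) := by positivity
    linarith [mul_le_mul_of_nonneg_left (hΦup x y) h5]
  intro ε hε
  obtain ⟨M, hM⟩ := hu.bounded (t + 1) (by linarith)
  have hM0 : 0 ≤ M := (abs_nonneg _).trans (hM 0 ⟨le_rfl, by linarith⟩ 0)
  have hE : ∀ s ∈ Set.Icc 0 (t + 1), ∀ x y, u s x * φ y - u s y * φ x ≤ 2 * M * φ 0 := by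
    intro s hs x y
    have h1 : u s x * φ y ≤ M * φ 0 :=
      mul_le_mul ((le_abs_self _).trans (hM s hs x)) (h.deriv_le y) (hpos y).le hM0
    have h2 : -u s y * φ x ≤ M * φ 0 :=
      mul_le_mul ((neg_le_abs _).trans (hM s hs y)) (h.deriv_le x) (hpos x).le hM0
    linarith
  set EE : ℝ → ℝ := fun t => Real.exp (-(c + 6) * t)
  set E6 : ℝ → ℝ := fun t => Real.exp (-6 * t)
  have hEE : ∀ t, HasDerivAt EE (-(c + 6) * EE t) t := fun t => by
    simpa [EE, mul_comm] using ((hasDerivAt_id t).const_mul (-(c + 6))).exp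
  have hE6 : ∀ t, HasDerivAt E6 (-6 * E6 t) t := fun t => by
    simpa [E6, mul_comm] using ((hasDerivAt_id t).const_mul (-6)).exp
  have hexpx : ∀ x y : ℝ, HasDerivAt (fun x' => Real.exp (y - x')) (-Real.exp (y - x)) x :=
    fun x y => by simpa using ((hasDerivAt_id x).const_sub y).exp
  have hexpy : ∀ x y : ℝ, HasDerivAt (fun y' => Real.exp (y' - x)) (Real.exp (y - x)) y :=
    fun x y => by simpa using ((hasDerivAt_id y).sub_const x).exp
  set Φx : ℝ → ℝ → ℝ := fun x y => K * Real.exp (y - x) * (φ x * φ y)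
    + K * (1 - Real.exp (y - x)) * (φ' x * φ y) + φ' x with hΦx
  set Φy : ℝ → ℝ → ℝ := fun x y => -K * Real.exp (y - x) * (φ x * φ y)
    + K * (1 - Real.exp (y - x)) * (φ x * φ' y) + φ' y with hΦy
  set Φxx : ℝ → ℝ → ℝ := fun x y => -K * Real.exp (y - x) * (φ x * φ y)
    + 2 * K * Real.exp (y - x) * (φ' x * φ y)
    + K * (1 - Real.exp (y - x)) * (-V x * φ x * φ y) + -V x * φ x with hΦxx
  set Φyy : ℝ → ℝ → ℝ := fun x y => -K * Real.exp (y - x) * (φ x * φ y)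
    - 2 * K * Real.exp (y - x) * (φ x * φ' y)
    + K * (1 - Real.exp (y - x)) * (φ x * (-V y * φ y)) + -V y * φ y with hΦyy
  have hdx : ∀ x y, HasDerivAt (fun x' => Φ x' y) (Φx x y) x := fun x y => by
    refine ((((hexpx x y).const_sub 1).const_mul K).mul ((hd x).mul_const (φ y))
      |>.add (hd x) |>.add_const (φ y)).congr_deriv ?_
    simp only [hΦx]; ring
  have hdy : ∀ x y, HasDerivAt (fun y' => Φ x y') (Φy x y) y := fun x y => by
    refine ((((hexpy x y).const_sub 1).const_mul K).mul ((hd y).const_mul (φ x))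
      |>.add_const (φ x) |>.add (hd y)).congr_deriv ?_
    simp only [hΦy]; ring
  have hdxx : ∀ x y, HasDerivAt (fun x' => Φx x' y) (Φxx x y) x := fun x y => by
    refine (((hexpx x y).const_mul K).mul ((hd x).mul_const (φ y))
      |>.add ((((hexpx x y).const_sub 1).const_mul K).mul ((hd' x).mul_const (φ y)))
      |>.add (hd' x)).congr_deriv ?_
    simp only [hΦxx]; ring
  have hdyy : ∀ x y, HasDerivAt (fun y' => Φy x y') (Φyy x y) y := fun x y => by
    refine (((hexpy x y).const_mul (-K)).mul ((hd y).const_mul (φ x))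
      |>.add ((((hexpy x y).const_sub 1).const_mul K).mul ((hd' y).const_mul (φ x)))
      |>.add (hd' y)).congr_deriv ?_
    simp only [hΦyy]; ring
  have hΦsuper : ∀ x y, y < x → Φxx x y + Φyy x y + (V x + V y) * Φ x y ≤ -c * Φ x y := by
    intro x y hlt
    have h1 := h.wronskian_nonpos hlt.le
    have h2 := mul_nonpos_of_nonneg_of_nonpos
      (mul_nonneg hK (Real.exp_pos (y - x)).le) h1
    have h3 := mul_le_mul_of_nonneg_left (hΦup x y) hc
    have h4 : Φxx x y + Φyy x y + (V x + V y) * Φ x y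
        = V x * φ y + V y * φ x - 2 * K * Real.exp (y - x) * (φ x * φ y)
          + 2 * (K * Real.exp (y - x) * (φ' x * φ y - φ x * φ' y)) := by
      simp only [hΦxx, hΦyy, hΦ]; ring
    rw [h4]
    linarith [hsuper x y]
  refine parabolic_min_principle (T := t + 1) (R := max 1 (2 * M * φ 0 / ε))
    (W := fun x y => V x + V y - 6)
    (q := fun t x y => B * Φ x y * EE t + ε * (1 + x ^ 2 + y ^ 2)
      - E6 t * (u t x * φ y - u t y * φ x))
    (qt := fun t x y => B * Φ x y * (-(c + 6) * EE t)
      - (-6 * E6 t * (u t x * φ y - u t y * φ x) + E6 t * (ut t x * φ y - ut t y * φ x)))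
    (qx := fun t x y => B * Φx x y * EE t + ε * (2 * x)
      - E6 t * (ux t x * φ y - u t y * φ' x))
    (qxx := fun t x y => B * Φxx x y * EE t + ε * 2
      - E6 t * (uxx t x * φ y - u t y * (-V x * φ x)))
    (qy := fun t x y => B * Φy x y * EE t + ε * (2 * y)
      - E6 t * (u t x * φ' y - ux t y * φ x))
    (qyy := fun t x y => B * Φyy x y * EE t + ε * 2
      - E6 t * (u t x * (-V y * φ y) - uxx t y * φ x))
    ?_ ?_ ?_ ?_ ?_ ?_ ?_ ?_ ?_ ?_ ?_ t ⟨ht, by linarith⟩ x y hyx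
  · have h1 : ContinuousOn (fun p : ℝ × ℝ × ℝ => u p.1 p.2.1) {p | 0 ≤ p.1} :=
      hu.continuousOn.comp (f := fun p : ℝ × ℝ × ℝ => (p.1, p.2.1)) (by fun_prop)
        fun p hp => hp
    have h2 : ContinuousOn (fun p : ℝ × ℝ × ℝ => u p.1 p.2.2) {p | 0 ≤ p.1} :=
      hu.continuousOn.comp (f := fun p : ℝ × ℝ × ℝ => (p.1, p.2.2)) (by fun_prop)
        fun p hp => hp
    have h3 : Continuous fun p : ℝ × ℝ × ℝ => Φ p.2.1 p.2.2 := hΦc.comp continuous_snd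
    have h4 : Continuous φ := h.continuous_deriv
    have h5 : Continuous fun p : ℝ × ℝ × ℝ => EE p.1 := by fun_prop
    have h6 : Continuous fun p : ℝ × ℝ × ℝ => E6 p.1 := by fun_prop
    have h7 : Continuous fun p : ℝ × ℝ × ℝ => ε * (1 + p.2.1 ^ 2 + p.2.2 ^ 2) := by fun_prop
    have h8 : Continuous fun p : ℝ × ℝ × ℝ => φ p.2.1 := h4.comp (by fun_prop)
    have h9 : Continuous fun p : ℝ × ℝ × ℝ => φ p.2.2 := h4.comp (by fun_prop)
    exact (((continuous_const.mul h3).mul h5).add h7).continuousOn.sub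
      (h6.continuousOn.mul ((h1.mul h9.continuousOn).sub (h2.mul h8.continuousOn)))
  · intro x y
    linarith [potential_le_one (n := n) m x, potential_le_one (n := n) m y]
  · intro x y hyx
    have h1 : u 0 x * φ y ≤ B * φ y :=
      mul_le_mul_of_nonneg_right ((le_abs_self _).trans (hB x)) (hpos y).le
    have h2 : -u 0 y * φ x ≤ B * φ x :=
      mul_le_mul_of_nonneg_right ((neg_le_abs _).trans (hB y)) (hpos x).le
    have h3 := mul_le_mul_of_nonneg_left (hΦlow x y hyx) hB0
    have h4 : 0 ≤ ε * (1 + x ^ 2 + y ^ 2) := by positivity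
    simp only [EE, E6, mul_zero, Real.exp_zero]
    linarith
  · intro s _ x
    have h1 : 0 ≤ Φ x x := (add_pos (hpos x) (hpos x)).le.trans (hΦlow x x le_rfl)
    simp only [sub_self, mul_zero, sub_zero]
    positivity
  · intro s hs x y hyx hxy
    have h1 : ∀ z : ℝ, max 1 (2 * M * φ 0 / ε) < |z| → 2 * M * φ 0 ≤ ε * z ^ 2 := by
      intro z hz
      obtain ⟨hz1, hz2⟩ := max_lt_iff.1 hz
      rw [div_lt_iff₀ hε] at hz2
      rw [← sq_abs z]
      nlinarith [mul_pos hε (zero_lt_one.trans hz1)]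
    have h2 : 2 * M * φ 0 ≤ ε * (1 + x ^ 2 + y ^ 2) := by
      have hx2 := mul_nonneg hε.le (sq_nonneg x)
      have hy2 := mul_nonneg hε.le (sq_nonneg y)
      rcases hxy with hx | hy
      · linarith [h1 x hx]
      · linarith [h1 y hy]
    have h3 : E6 s * (u s x * φ y - u s y * φ x) ≤ 2 * M * φ 0 := by
      have hX : 0 ≤ 2 * M * φ 0 := by have := hpos 0; positivity
      have hE1 : E6 s ≤ 1 := Real.exp_le_one_iff.2 (by linarith [hs.1])
      exact (mul_le_mul_of_nonneg_left (hE s hs x y) (Real.exp_pos _).le).trans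
        (mul_le_of_le_one_left hX hE1)
    have h4 : 0 ≤ B * Φ x y * EE s :=
      mul_nonneg (mul_nonneg hB0 ((add_pos (hpos x) (hpos y)).le.trans (hΦlow x y hyx)))
        (Real.exp_pos _).le
    linarith
  · intro t ht x y
    refine ((((hEE t).const_mul (B * Φ x y)).add_const (ε * (1 + x ^ 2 + y ^ 2))).sub
      ((hE6 t).mul (((hu.hasDerivAt_t t ht x).mul_const (φ y)).sub
        ((hu.hasDerivAt_t t ht y).mul_const (φ x))))).congr_deriv ?_
    simp only [Pi.sub_apply]
  · intro t ht x y
    have hsq : HasDerivAt (fun x : ℝ => 1 + x ^ 2 + y ^ 2) (2 * x) x := by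
      simpa using ((hasDerivAt_pow 2 x).const_add 1).add_const (y ^ 2)
    exact ((((hdx x y).const_mul B).mul_const (EE t)).add (hsq.const_mul ε)).sub
      ((((hu.hasDerivAt_x t ht x).mul_const (φ y)).sub ((hd x).const_mul (u t y))).const_mul (E6 t))
  · intro t ht x y
    have hid : HasDerivAt (fun x : ℝ => 2 * x) 2 x := by
      simpa using (hasDerivAt_id x).const_mul 2
    exact ((((hdxx x y).const_mul B).mul_const (EE t)).add (hid.const_mul ε)).sub
      ((((hu.hasDerivAt_xx t ht x).mul_const (φ y)).sub
        ((hd' x).const_mul (u t y))).const_mul (E6 t))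
  · intro t ht x y
    have hsq : HasDerivAt (fun y : ℝ => 1 + x ^ 2 + y ^ 2) (2 * y) y := by
      simpa using (hasDerivAt_pow 2 y).const_add (1 + x ^ 2)
    exact ((((hdy x y).const_mul B).mul_const (EE t)).add (hsq.const_mul ε)).sub
      ((((hd y).const_mul (u t x)).sub ((hu.hasDerivAt_x t ht y).mul_const (φ x))).const_mul (E6 t))
  · intro t ht x y
    have hid : HasDerivAt (fun x : ℝ => 2 * x) 2 y := by
      simpa using (hasDerivAt_id y).const_mul 2
    exact ((((hdyy x y).const_mul B).mul_const (EE t)).add (hid.const_mul ε)).sub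
      ((((hd' y).const_mul (u t x)).sub
        ((hu.hasDerivAt_xx t ht y).mul_const (φ x))).const_mul (E6 t))
  · intro t ht x y hlt
    rw [hu.eq t ht x, hu.eq t ht y]
    have h1 := mul_le_mul_of_nonneg_left (hΦsuper x y hlt)
      (mul_nonneg hB0 (Real.exp_pos (-(c + 6) * t)).le)
    have h2 : V x + V y ≤ 2 := by
      linarith [potential_le_one (n := n) m x, potential_le_one (n := n) m y]
    have h3 : 0 ≤ ε * ((2 - (V x + V y)) * (1 + x ^ 2 + y ^ 2) + 4 * (x ^ 2 + y ^ 2)) := by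
      have := sub_nonneg.2 h2
      positivity
    change B * EE t * _ ≤ B * EE t * _ at h1
    linear_combination h1 + h3

end IsKink

namespace IsClassicalSolution

variable {V : ℝ → ℝ} {u ut ux uxx : ℝ → ℝ → ℝ}

theorem hasDerivAt_intervalIntegral (hu : IsClassicalSolution V u ut ux uxx) {ψ : ℝ → ℝ}
    (hψ : Continuous ψ) {R t : ℝ} (ht : 0 < t) :
    HasDerivAt (fun s => ∫ y in -R..R, u s y * ψ y) (∫ y in -R..R, ut t y * ψ y) t := by
  have hcont : ContinuousOn (fun p : ℝ × ℝ => ut p.1 p.2 * ψ p.2)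
      (Set.Icc (t / 2) (2 * t) ×ˢ Set.uIcc (-R) R) :=
    (hu.continuousOn_ut.mono fun p hp => by
      have : t / 2 ≤ p.1 := hp.1.1
      exact (by linarith : 0 < p.1)).mul (hψ.comp continuous_snd).continuousOn
  obtain ⟨C, hC⟩ := (isCompact_Icc.prod isCompact_uIcc).exists_bound_of_continuousOn hcont
  refine (intervalIntegral.hasDerivAt_integral_of_dominated_loc_of_deriv_le
    (F' := fun s y => ut s y * ψ y) (bound := fun _ => C)
    (Icc_mem_nhds (by linarith : t / 2 < t) (by linarith : t < 2 * t)) ?_ ?_ ?_ ?_ ?_ ?_).2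
  · filter_upwards [lt_mem_nhds ht] with s hs
    exact ((hu.continuous_slice hs.le).mul hψ).aestronglyMeasurable
  · exact ((hu.continuous_slice ht.le).mul hψ).intervalIntegrable _ _
  · exact ((hu.continuous_ut_slice ht).mul hψ).aestronglyMeasurable
  · exact Eventually.of_forall fun y hy s hs => hC (s, y) ⟨hs, Set.uIoc_subset_uIcc hy⟩
  · exact intervalIntegrable_const
  · exact Eventually.of_forall fun y _ s hs =>
      (hu.hasDerivAt_t s (by linarith [hs.1]) y).mul_const _

theorem continuousOn_intervalIntegral (hu : IsClassicalSolution V u ut ux uxx) {ψ : ℝ → ℝ}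
    (hψ : Continuous ψ) {R T : ℝ} :
    ContinuousOn (fun s => ∫ y in -R..R, u s y * ψ y) (Set.Icc 0 T) := by
  rcases le_or_gt T 0 with hT | hT
  · exact (Set.subsingleton_Icc_of_ge hT).continuousOn _
  obtain ⟨M, hM⟩ := hu.bounded T hT
  intro t ht
  refine intervalIntegral.continuousWithinAt_of_dominated_interval
    (bound := fun y => M * |ψ y|) ?_ ?_ ?_ ?_
  · filter_upwards [self_mem_nhdsWithin] with s hs
    exact ((hu.continuous_slice hs.1).mul hψ).aestronglyMeasurable
  · filter_upwards [self_mem_nhdsWithin] with s hs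
    refine Eventually.of_forall fun y _ => ?_
    rw [Real.norm_eq_abs, abs_mul]
    exact mul_le_mul_of_nonneg_right (hM s hs y) (abs_nonneg _)
  · exact (continuous_const.mul hψ.abs).intervalIntegrable _ _
  · refine Eventually.of_forall fun y _ => ContinuousWithinAt.mul ?_ continuousWithinAt_const
    have h1 : ContinuousOn (fun s => u s y) (Set.Icc 0 T) :=
      hu.continuousOn.comp (f := fun s => (s, y)) (by fun_prop) fun s hs => hs.1
    exact h1 t ht

theorem integral_ut_mul (hu : IsClassicalSolution V u ut ux uxx) (hV : Continuous V)
    {ψ ψ' ψ'' : ℝ → ℝ} (hψ : ∀ x, HasDerivAt ψ (ψ' x) x) (hψ' : ∀ x, HasDerivAt ψ' (ψ'' x) x)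
    (hψc : Continuous ψ'') {R t : ℝ} (ht : 0 < t) (h1 : ψ R = 0) (h2 : ψ (-R) = 0)
    (h3 : ψ' R = 0) (h4 : ψ' (-R) = 0) :
    ∫ y in -R..R, ut t y * ψ y = ∫ y in -R..R, u t y * (ψ'' y + V y * ψ y) := by
  have c1 : Continuous ψ := continuous_iff_continuousAt.2 fun x => (hψ x).continuousAt
  have c2 := hu.continuous_slice ht.le
  have c3 := hu.continuous_uxx_slice ht
  have c4 := hu.continuous_ut_slice ht
  have hparts : ∫ y in -R..R, (uxx t y * ψ y - u t y * ψ'' y) = 0 := by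
    rw [intervalIntegral.integral_eq_sub_of_hasDerivAt
      (f := fun y => ux t y * ψ y - u t y * ψ' y)]
    · simp [h1, h2, h3, h4]
    · intro y _
      refine (((hu.hasDerivAt_xx t ht y).mul (hψ y)).sub
        ((hu.hasDerivAt_x t ht y).mul (hψ' y))).congr_deriv ?_
      ring
    · exact ((c3.mul c1).sub (c2.mul hψc)).intervalIntegrable _ _
  rw [← sub_eq_zero, ← intervalIntegral.integral_sub, ← hparts]
  · refine intervalIntegral.integral_congr fun y _ => ?_
    simp only [hu.eq t ht y]
    ring
  · exact (c4.mul c1).intervalIntegrable _ _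
  · exact (c2.mul (hψc.add (hV.mul c1))).intervalIntegrable _ _

/-- Conservation of the pairing with an integrable zero mode `φ` of the operator `∂ₓ² + V`. -/
theorem integral_mul_eq (hu : IsClassicalSolution V u ut ux uxx) (hV : Continuous V)
    {φ φ' : ℝ → ℝ} (hφ : ∀ x, HasDerivAt φ (φ' x) x)
    (hφ' : ∀ x, HasDerivAt φ' (-V x * φ x) x) (hint : Integrable φ) (hint' : Integrable φ')
    {t : ℝ} (ht : 0 < t) : ∫ y, u t y * φ y = ∫ y, u 0 y * φ y := by
  obtain ⟨M, hM⟩ := hu.bounded t ht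
  have hM0 : 0 ≤ M := (abs_nonneg _).trans (hM 0 ⟨le_rfl, ht.le⟩ 0)
  have cφ : Continuous φ := continuous_iff_continuousAt.2 fun x => (hφ x).continuousAt
  have cφ' : Continuous φ' := continuous_iff_continuousAt.2 fun x => (hφ' x).continuousAt
  set χ : ℝ → ℝ → ℝ := fun R y => (1 - (y / R) ^ 2) ^ 2 with hχ
  set χ' : ℝ → ℝ → ℝ := fun R y => -4 * (y / R) * (1 - (y / R) ^ 2) / R with hχ'
  set χ'' : ℝ → ℝ → ℝ := fun R y => (-4 + 12 * (y / R) ^ 2) / R ^ 2 with hχ''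
  have dχ : ∀ R y, HasDerivAt (χ R) (χ' R y) y := fun R y => by
    refine (((((hasDerivAt_id y).div_const R).fun_pow 2).const_sub 1).fun_pow 2).congr_deriv ?_
    simp only [hχ', id]
    ring
  have dχ' : ∀ R y, HasDerivAt (χ' R) (χ'' R y) y := fun R y => by
    have hd := (hasDerivAt_id y).div_const R
    refine (((hd.const_mul (-4)).mul ((hd.fun_pow 2).const_sub 1)).div_const R).congr_deriv ?_
    simp only [hχ'', id]
    ring
  have cχ : ∀ R, Continuous (χ R) := fun R => by simp only [hχ]; fun_prop
  have cχ' : ∀ R, Continuous (χ' R) := fun R => by simp only [hχ']; fun_prop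
  have cχ'' : ∀ R, Continuous (χ'' R) := fun R => by simp only [hχ'']; fun_prop
  set I : ℝ → ℝ → ℝ := fun R s => ∫ y in -R..R, u s y * (φ y * χ R y) with hI
  set L : ℝ := M * (8 * (∫ y, |φ' y|) + 8 * ∫ y, |φ y|) with hL
  have hbound : ∀ R, 1 ≤ R → |I R t - I R 0| ≤ t * (L / R) := by
    intro R hR
    have hR0 : 0 < R := by linarith
    have hder : ∀ s ∈ Set.Ioo 0 t, HasDerivAt (I R)
        (∫ y in -R..R, u s y * (2 * φ' y * χ' R y + φ y * χ'' R y)) s := by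
      intro s hs
      have h1 := hu.hasDerivAt_intervalIntegral (cφ.mul (cχ R)) (R := R) hs.1
      have h2 := hu.integral_ut_mul hV (ψ := fun y => φ y * χ R y)
        (ψ' := fun y => φ' y * χ R y + φ y * χ' R y)
        (ψ'' := fun y => -V y * φ y * χ R y + φ' y * χ' R y + (φ' y * χ' R y + φ y * χ'' R y))
        (fun y => (hφ y).mul (dχ R y))
        (fun y => ((hφ' y).mul (dχ R y)).add ((hφ y).mul (dχ' R y)))
        (by
          have := cχ R
          have := cχ' R
          have := cχ'' R
          fun_prop) (R := R) hs.1
        (by simp [hχ, hR0.ne']) (by simp [hχ, hR0.ne'])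
        (by simp [hχ, hχ', hR0.ne']) (by simp [hχ, hχ', hR0.ne', neg_div])
      refine h1.congr_deriv (h2.trans (intervalIntegral.integral_congr fun y _ => ?_))
      ring
    obtain ⟨s, hs, hslope⟩ := exists_hasDerivAt_eq_slope (I R) _ ht
      (hu.continuousOn_intervalIntegral (cφ.mul (cχ R))) hder
    have hval : |∫ y in -R..R, u s y * (2 * φ' y * χ' R y + φ y * χ'' R y)| ≤ L / R := by
      have hle : -R ≤ R := by linarith
      have hint₁ : Integrable fun y => M / R * (8 * |φ' y| + 8 * |φ y|) :=
        ((hint'.abs.const_mul 8).add (hint.abs.const_mul 8)).const_mul _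
      have h1 : ‖∫ y in -R..R, u s y * (2 * φ' y * χ' R y + φ y * χ'' R y)‖
          ≤ ∫ y in -R..R, M / R * (8 * |φ' y| + 8 * |φ y|) := by
        refine intervalIntegral.norm_integral_le_of_norm_le hle (Eventually.of_forall ?_)
          hint₁.intervalIntegrable
        intro y hy
        have hyR : |y / R| ≤ 1 := by
          rw [abs_div, abs_of_pos hR0, div_le_one hR0]
          exact abs_le.2 ⟨hy.1.le, hy.2⟩
        have hsq : (y / R) ^ 2 ≤ 1 := by rw [← sq_abs]; nlinarith [abs_nonneg (y / R)]
        have b1 : |χ' R y| ≤ 4 / R := by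
          simp only [hχ']
          rw [abs_div, abs_of_pos hR0]
          refine div_le_div_of_nonneg_right ?_ hR0.le
          rw [abs_mul, abs_mul, abs_of_nonneg (sub_nonneg.2 hsq)]
          norm_num
          nlinarith [abs_nonneg (y / R), sq_nonneg (y / R)]
        have b2 : |χ'' R y| ≤ 8 / R := by
          simp only [hχ'']
          rw [abs_div, abs_of_pos (by positivity : 0 < R ^ 2)]
          refine div_le_div₀ (by norm_num) ?_ hR0 (by nlinarith)
          rw [abs_le]
          constructor <;> nlinarith [sq_nonneg (y / R)]
        rw [Real.norm_eq_abs, abs_mul]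
        have b3 : |2 * φ' y * χ' R y + φ y * χ'' R y| ≤ 1 / R * (8 * |φ' y| + 8 * |φ y|) := by
          refine (abs_add_le _ _).trans ?_
          rw [abs_mul, abs_mul, abs_mul, abs_two]
          have := mul_le_mul_of_nonneg_left b1 (abs_nonneg (φ' y))
          have := mul_le_mul_of_nonneg_left b2 (abs_nonneg (φ y))
          calc 2 * |φ' y| * |χ' R y| + |φ y| * |χ'' R y|
              ≤ 2 * (|φ' y| * (4 / R)) + |φ y| * (8 / R) := by linarith
            _ = _ := by ring
        calc |u s y| * |2 * φ' y * χ' R y + φ y * χ'' R y|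
            ≤ M * (1 / R * (8 * |φ' y| + 8 * |φ y|)) :=
              mul_le_mul (hM s ⟨hs.1.le, hs.2.le⟩ y) b3 (abs_nonneg _) hM0
          _ = _ := by ring
      rw [Real.norm_eq_abs] at h1
      refine h1.trans ?_
      rw [intervalIntegral.integral_of_le hle]
      refine (setIntegral_le_integral hint₁ (Eventually.of_forall fun y => ?_)).trans ?_
      · simp only [Pi.zero_apply]
        positivity
      · rw [integral_const_mul, integral_add (hint'.abs.const_mul 8) (hint.abs.const_mul 8),
          integral_const_mul, integral_const_mul, hL]
        exact (by ring : _ = _).le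
    rw [hslope, sub_zero, abs_div, abs_of_pos ht, div_le_iff₀ ht] at hval
    linarith
  have hlim : ∀ s ∈ Set.Icc 0 t,
      Tendsto (fun k : ℕ => I (k + 1) s) atTop (nhds (∫ y, u s y * φ y)) := by
    intro s hs
    have hrw : ∀ k : ℕ, I (k + 1) s = ∫ y, (Set.Ioc (-((k : ℝ) + 1)) (k + 1)).indicator
        (fun y => u s y * (φ y * χ (k + 1) y)) y := by
      intro k
      have : (0 : ℝ) ≤ k := k.cast_nonneg
      rw [integral_indicator measurableSet_Ioc, hI]
      exact intervalIntegral.integral_of_le (by linarith)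
    simp only [hrw]
    have cu := hu.continuous_slice hs.1
    refine tendsto_integral_of_dominated_convergence (fun y => M * |φ y|) (fun k => ?_)
      (hint.abs.const_mul M) (fun k => Eventually.of_forall fun y => ?_)
      (Eventually.of_forall fun y => ?_)
    · exact (cu.mul (cφ.mul (cχ _))).aestronglyMeasurable.indicator measurableSet_Ioc
    · by_cases hy : y ∈ Set.Ioc (-((k : ℝ) + 1)) (k + 1)
      · rw [Set.indicator_of_mem hy, Real.norm_eq_abs, abs_mul, abs_mul]
        have hk : (0 : ℝ) < k + 1 := by positivity
        have hyR : |y / (k + 1)| ≤ 1 := by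
          rw [abs_div, abs_of_pos hk, div_le_one hk]
          exact abs_le.2 ⟨hy.1.le, hy.2⟩
        have hsq : (y / (k + 1)) ^ 2 ≤ 1 := by
          rw [← sq_abs]; nlinarith [abs_nonneg (y / ((k : ℝ) + 1))]
        have hχ1 : |χ (k + 1) y| ≤ 1 := by
          simp only [hχ]
          rw [abs_of_nonneg (sq_nonneg _)]
          exact pow_le_one₀ (by linarith) (by linarith [sq_nonneg (y / ((k : ℝ) + 1))])
        exact mul_le_mul (hM s hs y) (mul_le_of_le_one_right (abs_nonneg _) hχ1)
          (by positivity) hM0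
      · rw [Set.indicator_of_notMem hy, norm_zero]
        positivity
    · have hk : Tendsto (fun k : ℕ => (k : ℝ) + 1) atTop atTop :=
        tendsto_atTop_add_const_right _ _ tendsto_natCast_atTop_atTop
      have h1 : Tendsto (fun k : ℕ => y / ((k : ℝ) + 1)) atTop (nhds 0) := hk.const_div_atTop y
      have h2 : Tendsto (fun k : ℕ => u s y * (φ y * χ ((k : ℝ) + 1) y)) atTop
          (nhds (u s y * φ y)) := by
        have := (((h1.pow 2).const_sub 1).pow 2).const_mul (φ y) |>.const_mul (u s y)
        simpa [hχ] using this
      refine h2.congr' ?_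
      filter_upwards [hk.eventually_gt_atTop |y|] with k hky
      rw [Set.indicator_of_mem]
      exact ⟨(abs_lt.1 hky).1, (abs_lt.1 hky).2.le⟩
  have hdiff := ((hlim t ⟨ht.le, le_rfl⟩).sub (hlim 0 ⟨le_rfl, ht.le⟩)).abs
  have hzero : Tendsto (fun k : ℕ => t * (L / ((k : ℝ) + 1))) atTop (nhds 0) := by
    have hk : Tendsto (fun k : ℕ => (k : ℝ) + 1) atTop atTop :=
      tendsto_atTop_add_const_right _ _ tendsto_natCast_atTop_atTop
    simpa using (hk.const_div_atTop L).const_mul t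
  have hle := le_of_tendsto_of_tendsto' hdiff hzero fun k => hbound (k + 1) (by simp)
  exact sub_eq_zero.1 (abs_nonpos_iff.1 hle)

end IsClassicalSolution

namespace IsKink

variable {n : ℕ} {m : ℝ → ℝ} {u ut ux uxx : ℝ → ℝ → ℝ}

theorem two_point_bound (h : IsKink n m) {K c : ℝ} (hK : 0 ≤ K)
    (hsuper : ∀ x y : ℝ,
      kinkPotential n m x * deriv m y + kinkPotential n m y * deriv m x
          - 2 * K * Real.exp (y - x) * (deriv m x * deriv m y)
        ≤ -c * (K * (deriv m x * deriv m y) + deriv m x + deriv m y)) (hc : 0 ≤ c)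
    (hu : IsClassicalSolution (kinkPotential n m) u ut ux uxx) {B : ℝ}
    (hB : ∀ x, |u 0 x| ≤ B) {t : ℝ} (ht : 0 ≤ t) (x y : ℝ) :
    |u t x * deriv m y - u t y * deriv m x|
      ≤ B * Real.exp (-c * t) * (K * (deriv m x * deriv m y) + deriv m x + deriv m y) := by
  have key : ∀ {a b : ℝ}, b ≤ a → |u t a * deriv m b - u t b * deriv m a|
      ≤ B * Real.exp (-c * t) * (K * (deriv m a * deriv m b) + deriv m a + deriv m b) := by
    intro a b hba
    have h1 := h.two_point_upper_bound hK hsuper hc hu hB ht hba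
    have h2 := h.two_point_upper_bound hK hsuper hc hu.neg (by simpa using hB) ht hba
    exact abs_le.2 ⟨by linarith, h1⟩
  rcases le_total y x with hyx | hxy
  · exact key hyx
  · rw [abs_sub_comm]
    convert key hxy using 2
    ring

theorem integrable_deriv_sq (h : IsKink n m) : Integrable fun y => deriv m y ^ 2 := by
  refine (h.integrable_deriv.const_mul (deriv m 0)).mono'
    (h.continuous_deriv.pow 2).aestronglyMeasurable (Eventually.of_forall fun y => ?_)
  rw [Real.norm_eq_abs, abs_of_nonneg (sq_nonneg _), sq]
  exact mul_le_mul_of_nonneg_right (h.deriv_le y) (h.deriv_pos y).le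

theorem integral_deriv_sq_pos (h : IsKink n m) : 0 < ∫ y, deriv m y ^ 2 :=
  integral_pos_of_integrable_nonneg_nonzero (x := 0) (h.continuous_deriv.pow 2)
    h.integrable_deriv_sq (fun _ => sq_nonneg _) (pow_pos (h.deriv_pos 0) 2).ne'

theorem abs_sub_projection_le (h : IsKink n m) {K c : ℝ} (hK : 0 ≤ K)
    (hsuper : ∀ x y : ℝ,
      kinkPotential n m x * deriv m y + kinkPotential n m y * deriv m x
          - 2 * K * Real.exp (y - x) * (deriv m x * deriv m y)
        ≤ -c * (K * (deriv m x * deriv m y) + deriv m x + deriv m y)) (hc : 0 ≤ c)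
    (hu : IsClassicalSolution (kinkPotential n m) u ut ux uxx) {B : ℝ}
    (hB : ∀ x, |u 0 x| ≤ B) {t : ℝ} (ht : 0 ≤ t) (x : ℝ) :
    |u t x - ((∫ y, u 0 y * deriv m y) / (∫ y, deriv m y ^ 2)) * deriv m x|
      ≤ (K * deriv m 0 + deriv m 0 * (∫ y, deriv m y) / (∫ y, deriv m y ^ 2) + 1)
        * Real.exp (-c * t) * B := by
  set φ := deriv m
  set N := ∫ y, φ y ^ 2
  have hN : 0 < N := h.integral_deriv_sq_pos
  have hB0 : 0 ≤ B := (abs_nonneg _).trans (hB 0)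
  have hcons : ∫ y, u t y * φ y = ∫ y, u 0 y * φ y := by
    rcases ht.eq_or_lt with rfl | ht
    · rfl
    · exact hu.integral_mul_eq h.continuous_potential h.hasDerivAt_deriv h.hasDerivAt_second
        h.integrable_deriv h.integrable_second ht
  obtain ⟨M, hM⟩ := hu.bounded (t + 1) (by linarith)
  have hint : Integrable fun y => u t y * φ y :=
    h.integrable_deriv.bdd_mul (c := M) (hu.continuous_slice ht).aestronglyMeasurable
      (Eventually.of_forall fun y => hM t ⟨ht, by linarith⟩ y)
  have hid : ∫ y, (u t x * φ y ^ 2 - φ x * (u t y * φ y))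
      = u t x * N - φ x * ∫ y, u 0 y * φ y := by
    rw [integral_sub (h.integrable_deriv_sq.const_mul _) (hint.const_mul _),
      integral_const_mul, integral_const_mul, hcons]
  have hint₂ : Integrable fun y => B * Real.exp (-c * t)
      * (K * φ x * φ y ^ 2 + φ x * φ y + φ y ^ 2) :=
    (((h.integrable_deriv_sq.const_mul _).add (h.integrable_deriv.const_mul _)).add
      h.integrable_deriv_sq).const_mul _
  have hle : |∫ y, (u t x * φ y ^ 2 - φ x * (u t y * φ y))|
      ≤ ∫ y, B * Real.exp (-c * t) * (K * φ x * φ y ^ 2 + φ x * φ y + φ y ^ 2) := by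
    rw [← Real.norm_eq_abs]
    refine norm_integral_le_of_norm_le hint₂ (Eventually.of_forall fun y => ?_)
    have h1 := mul_le_mul_of_nonneg_right (h.two_point_bound hK hsuper hc hu hB ht x y)
      (h.deriv_pos y).le
    rw [Real.norm_eq_abs]
    calc |u t x * φ y ^ 2 - φ x * (u t y * φ y)|
        = |u t x * φ y - u t y * φ x| * φ y := by
          rw [show u t x * φ y ^ 2 - φ x * (u t y * φ y)
            = (u t x * φ y - u t y * φ x) * φ y by ring, abs_mul, abs_of_pos (h.deriv_pos y)]
      _ ≤ _ := h1
      _ = _ := by ring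
  have hsplit : ∫ y, (K * φ x * φ y ^ 2 + φ x * φ y + φ y ^ 2)
      = K * φ x * N + φ x * (∫ y, φ y) + N := by
    have i1 : Integrable fun y => K * φ x * φ y ^ 2 := h.integrable_deriv_sq.const_mul _
    have i2 : Integrable fun y => φ x * φ y := h.integrable_deriv.const_mul _
    have i3 : Integrable fun y => K * φ x * φ y ^ 2 + φ x * φ y := i1.add i2
    rw [integral_add i3 h.integrable_deriv_sq, integral_add i1 i2, integral_const_mul,
      integral_const_mul]
  rw [hid, integral_const_mul, hsplit] at hle
  have hφ1 : 0 ≤ ∫ y, φ y := integral_nonneg fun y => (h.deriv_pos y).le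
  have hφx : φ x ≤ φ 0 := h.deriv_le x
  have hup : K * φ x * N + φ x * (∫ y, φ y) + N ≤ K * φ 0 * N + φ 0 * (∫ y, φ y) + N := by
    gcongr
  have heq : u t x - ((∫ y, u 0 y * φ y) / N) * φ x
      = (u t x * N - φ x * ∫ y, u 0 y * φ y) / N := by
    field_simp
  rw [heq, abs_div, abs_of_pos hN, div_le_iff₀ hN]
  refine hle.trans ((mul_le_mul_of_nonneg_left hup (by positivity)).trans_eq ?_)
  field_simp

end IsKink

/-- `L^∞` exponential decay of the linearized Allen–Cahn semigroup away from the
projection onto the span of `m'`. -/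
theorem stmt_1 (n : ℕ) (hn : 1 ≤ n) (m : ℝ → ℝ)
    (hm : ContDiff ℝ 2 m) (hmono : StrictMono m)
    (heq : ∀ x : ℝ, deriv (deriv m) x + m x - m x ^ (2 * n + 1) = 0)
    (h0 : m 0 = 0)
    (htop : Tendsto m atTop (nhds 1))
    (hbot : Tendsto m atBot (nhds (-1))) :
    ∃ c > (0:ℝ), ∃ C > (0:ℝ),
      ∀ (v : ℝ → ℝ) (u ut ux uxx : ℝ → ℝ → ℝ),
        Continuous v → (∃ M : ℝ, ∀ x : ℝ, |v x| ≤ M) →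
        ContinuousOn (fun p : ℝ × ℝ => u p.1 p.2) {p : ℝ × ℝ | 0 ≤ p.1} →
        (∀ T > (0:ℝ), ∃ M : ℝ, ∀ t ∈ Set.Icc (0:ℝ) T, ∀ x : ℝ, |u t x| ≤ M) →
        (∀ x : ℝ, u 0 x = v x) →
        ContinuousOn (fun p : ℝ × ℝ => ut p.1 p.2) {p : ℝ × ℝ | 0 < p.1} →
        ContinuousOn (fun p : ℝ × ℝ => ux p.1 p.2) {p : ℝ × ℝ | 0 < p.1} →
        ContinuousOn (fun p : ℝ × ℝ => uxx p.1 p.2) {p : ℝ × ℝ | 0 < p.1} →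
        (∀ t : ℝ, 0 < t → ∀ x : ℝ,
          HasDerivAt (fun s => u s x) (ut t x) t ∧
          HasDerivAt (fun y => u t y) (ux t x) x ∧
          HasDerivAt (fun y => ux t y) (uxx t x) x ∧
          ut t x = uxx t x + (1 - (2 * (n:ℝ) + 1) * m x ^ (2 * n)) * u t x) →
        ∀ t : ℝ, 0 ≤ t → ∀ x : ℝ,
          |u t x - ((∫ y : ℝ, v y * deriv m y) / (∫ y : ℝ, (deriv m y) ^ 2)) * deriv m x|
            ≤ C * Real.exp (-c * t) * ⨆ y : ℝ, |v y| := by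
  have h : IsKink n m := ⟨hn, hm, hmono, heq, h0, htop, hbot⟩
  obtain ⟨K, hK, c, hc, hsuper⟩ := h.exists_supersolution_bound
  refine ⟨c, hc,
    K * deriv m 0 + deriv m 0 * (∫ y, deriv m y) / (∫ y, deriv m y ^ 2) + 1, ?_, ?_⟩
  · have h1 : 0 ≤ ∫ y, deriv m y := integral_nonneg fun y => (h.deriv_pos y).le
    have h2 := h.integral_deriv_sq_pos
    have h3 := h.deriv_pos 0
    positivity
  · intro v u ut ux uxx _ hvb huc hub hu0 hutc _ huxxc hpde t ht x
    obtain ⟨M, hM⟩ := hvb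
    have hu : IsClassicalSolution (kinkPotential n m) u ut ux uxx :=
      ⟨huc, hub, hutc, huxxc, fun t ht x => (hpde t ht x).1, fun t ht x => (hpde t ht x).2.1,
        fun t ht x => (hpde t ht x).2.2.1, fun t ht x => (hpde t ht x).2.2.2⟩
    have hB : ∀ x, |u 0 x| ≤ ⨆ y, |v y| := fun x => by
      rw [hu0 x]
      exact le_ciSup (f := fun y => |v y|) ⟨M, by rintro _ ⟨y, rfl⟩; exact hM y⟩ x
    have := h.abs_sub_projection_le hK hsuper hc.le hu hB ht x
    simpa only [hu0] using this
end

section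
/- Let n ≥ 1 be an integer and let m : ℝ → ℝ be the unique increasing solution of m'' + m − m^{2n+1} = 0 with m(0) = 0 and m(x) → ±1 as x → ±∞. There exist constants β, c, C > 0 (depending only on n) such that the following holds: if v : ℝ → ℝ is bounded and continuous with inf_{θ∈ℝ} sup_{x∈ℝ} |v(x) − m(x−θ)| < β, and u : [0,∞) × ℝ → ℝ is continuous, bounded on [0,T] × ℝ for every T > 0, satisfies u(0,·) = v, and on (0,∞) × ℝ is once continuously differentiable in t and twice continuously differentiable in x with ∂_t u = ∂_x² u + u − u^{2n+1}, then there exists ζ ∈ ℝ such that for all t ≥ 0, sup_{x∈ℝ} |u(t,x) − m(x − ζ)| ≤ C·e^{−ct}·inf_{θ∈ℝ} sup_{x∈ℝ} |v(x) − m(x−θ)|. -/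
open Filter MeasureTheory

/-! ### A parabolic maximum principle in two space variables -/

/-- Second-order necessary condition at a local maximum. -/
theorem IsLocalMax.second_deriv_nonpos {f f' : ℝ → ℝ} {x f'' : ℝ} (h : IsLocalMax f x)
    (hf : ∀ y, HasDerivAt f (f' y) y) (hf' : HasDerivAt f' f'' x) : f'' ≤ 0 := by
  by_contra! hpos
  have hd : deriv f = f' := funext fun y => (hf y).deriv
  have hmin : IsLocalMin f x :=
    isLocalMin_of_deriv_deriv_pos (by rw [hd, hf'.deriv]; exact hpos) h.deriv_eq_zero
      (hf x).continuousAt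
  have hconst : f =ᶠ[nhds x] fun _ => f x := by
    filter_upwards [h, hmin] with y h1 h2 using le_antisymm h1 h2
  have hderiv : f' =ᶠ[nhds x] fun _ => (0 : ℝ) := by
    have := hconst.deriv
    rw [hd] at this
    simpa using this
  have := hderiv.deriv_eq
  rw [hf'.deriv] at this
  simp at this
  exact hpos.ne' this

/-- First-order necessary condition at a maximum over a left neighbourhood. -/
theorem HasDerivAt.nonneg_of_le_left {f : ℝ → ℝ} {f' a t : ℝ} (hf : HasDerivAt f f' t)
    (hat : a < t) (h : ∀ s ∈ Set.Icc a t, f s ≤ f t) : 0 ≤ f' := by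
  have hs := (hasDerivAt_iff_tendsto_slope_left_right.mp hf).1
  refine ge_of_tendsto hs ?_
  filter_upwards [Ioo_mem_nhdsLT hat] with s hs
  rw [slope_def_field]
  exact div_nonneg_of_nonpos (by linarith [h s ⟨hs.1.le, hs.2.le⟩]) (by linarith [hs.2])

/-- A bounded subsolution of `Z_t = Z_xx + Z_yy + k Z` that is nonpositive on the parabolic boundary
of `[0, T] × Ω` is nonpositive. The differential inequality is only required where `Z` is positive. -/
theorem parabolic_max_principle {Z : ℝ → ℝ → ℝ → ℝ} {Ω : Set (ℝ × ℝ)} {T k M : ℝ}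
    (hΩ : IsClosed Ω)
    (hcont : ContinuousOn (fun p : ℝ × ℝ × ℝ => Z p.1 p.2.1 p.2.2) (Set.Icc 0 T ×ˢ Ω))
    (hbdd : ∀ t ∈ Set.Icc 0 T, ∀ x y, (x, y) ∈ Ω → Z t x y ≤ M)
    (hinit : ∀ x y, (x, y) ∈ Ω → Z 0 x y ≤ 0)
    (hbdry : ∀ t ∈ Set.Icc 0 T, ∀ x y, (x, y) ∈ frontier Ω → Z t x y ≤ 0)
    (hpde : ∀ t, 0 < t → t ≤ T → ∀ x y, (x, y) ∈ interior Ω → 0 < Z t x y →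
      ∃ (zt zxx zyy : ℝ) (zx zy : ℝ → ℝ), HasDerivAt (fun s => Z s x y) zt t ∧
        (∀ x', HasDerivAt (fun ξ => Z t ξ y) (zx x') x') ∧ HasDerivAt zx zxx x ∧
        (∀ y', HasDerivAt (fun ξ => Z t x ξ) (zy y') y') ∧ HasDerivAt zy zyy y ∧
        zt - zxx - zyy ≤ k * Z t x y) :
    ∀ t ∈ Set.Icc 0 T, ∀ x y, (x, y) ∈ Ω → Z t x y ≤ 0 := by
  intro t₁ ht₁ x₁ y₁ hxy₁
  by_contra! hpos
  set Φ : ℝ → ℝ → ℝ → ℝ → ℝ := fun η t x y =>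
    Real.exp (-k * t) * Z t x y - η * (x ^ 2 + y ^ 2 + 5 * t) with hΦ
  have hT : 0 ≤ T := ht₁.1.trans ht₁.2
  obtain ⟨η, hη, hη₁⟩ : ∃ η > 0, 0 < Φ η t₁ x₁ y₁ := by
    have hq : 0 ≤ x₁ ^ 2 + y₁ ^ 2 + 5 * t₁ := by have := ht₁.1; positivity
    have hp : 0 < Real.exp (-k * t₁) * Z t₁ x₁ y₁ := by positivity
    refine ⟨Real.exp (-k * t₁) * Z t₁ x₁ y₁ / (x₁ ^ 2 + y₁ ^ 2 + 5 * t₁ + 1), by positivity, ?_⟩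
    simp only [hΦ]
    rw [div_mul_eq_mul_div, sub_pos, div_lt_iff₀ (by positivity)]
    nlinarith
  have hexp : ∀ t ∈ Set.Icc 0 T, Real.exp (-k * t) ≤ Real.exp (|k| * T) := by
    intro t ht
    apply Real.exp_le_exp.mpr
    calc -k * t ≤ |k| * t := mul_le_mul_of_nonneg_right (neg_le_abs k) ht.1
      _ ≤ |k| * T := mul_le_mul_of_nonneg_left ht.2 (abs_nonneg k)
  set B := Real.exp (|k| * T) * |M| with hB
  have hB0 : 0 ≤ B := by positivity
  have hΨ : ∀ t ∈ Set.Icc 0 T, ∀ x y, (x, y) ∈ Ω → Real.exp (-k * t) * Z t x y ≤ B := by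
    intro t ht x y hxy
    calc Real.exp (-k * t) * Z t x y ≤ Real.exp (-k * t) * |M| :=
          mul_le_mul_of_nonneg_left ((hbdd t ht x y hxy).trans (le_abs_self M)) (Real.exp_pos _).le
      _ ≤ B := mul_le_mul_of_nonneg_right (hexp t ht) (abs_nonneg M)
  set R := B / η + 1 with hR
  have hR1 : 1 ≤ R := by have : 0 ≤ B / η := by positivity
                         linarith
  have hΦpos : ∀ t ∈ Set.Icc 0 T, ∀ x y, (x, y) ∈ Ω → 0 < Φ η t x y → x ^ 2 + y ^ 2 ≤ R := by
    intro t ht x y hxy h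
    have h1 := hΨ t ht x y hxy
    simp only [hΦ] at h
    have h2 : η * (x ^ 2 + y ^ 2) ≤ B := by nlinarith [ht.1, mul_nonneg hη.le ht.1]
    have : x ^ 2 + y ^ 2 ≤ B / η := by rw [le_div_iff₀ hη]; linarith
    linarith
  set K : Set (ℝ × ℝ × ℝ) :=
    Set.Icc 0 T ×ˢ (Ω ∩ Set.Icc (-R) R ×ˢ Set.Icc (-R) R) with hK
  have hKc : IsCompact K :=
    isCompact_Icc.prod ((isCompact_Icc.prod isCompact_Icc).inter_left hΩ)
  have hmemK : ∀ t ∈ Set.Icc 0 T, ∀ x y, (x, y) ∈ Ω → x ^ 2 + y ^ 2 ≤ R → (t, x, y) ∈ K := by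
    intro t ht x y hxy h
    exact ⟨ht, hxy, ⟨by nlinarith [sq_nonneg y], by nlinarith [sq_nonneg y]⟩,
      ⟨by nlinarith [sq_nonneg x], by nlinarith [sq_nonneg x]⟩⟩
  have hΦc : ContinuousOn (fun p : ℝ × ℝ × ℝ => Φ η p.1 p.2.1 p.2.2) K := by
    have h1 : ContinuousOn (fun p : ℝ × ℝ × ℝ => Z p.1 p.2.1 p.2.2) K :=
      hcont.mono fun p hp => ⟨hp.1, hp.2.1⟩
    exact (ContinuousOn.mul (by fun_prop) h1).sub (by fun_prop)
  have hK₁ := hmemK t₁ ht₁ x₁ y₁ hxy₁ (hΦpos t₁ ht₁ x₁ y₁ hxy₁ hη₁)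
  obtain ⟨⟨t, x, y⟩, hpK, hmax⟩ := hKc.exists_isMaxOn ⟨_, hK₁⟩ hΦc
  have hval : 0 < Φ η t x y := hη₁.trans_le (hmax hK₁)
  have ht : t ∈ Set.Icc 0 T := hpK.1
  have hxy : (x, y) ∈ Ω := hpK.2.1
  have hglob : ∀ t' ∈ Set.Icc 0 T, ∀ x' y', (x', y') ∈ Ω → Φ η t' x' y' ≤ Φ η t x y := by
    intro t' ht' x' y' hxy'
    by_cases h : 0 < Φ η t' x' y'
    · exact hmax (hmemK t' ht' x' y' hxy' (hΦpos t' ht' x' y' hxy' h))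
    · exact (not_lt.mp h).trans hval.le
  have hZpos : 0 < Z t x y := by
    have h0 : 0 ≤ η * (x ^ 2 + y ^ 2 + 5 * t) := by have := ht.1; positivity
    have : 0 < Real.exp (-k * t) * Z t x y := by
      simp only [hΦ] at hval
      linarith
    exact (pos_iff_pos_of_mul_pos this).mp (Real.exp_pos _)
  have ht0 : 0 < t := by
    refine ht.1.lt_of_ne ?_
    rintro rfl
    exact absurd (hinit x y hxy) (not_le.mpr hZpos)
  have hinterior : (x, y) ∈ interior Ω := by
    by_contra hni
    exact absurd (hbdry t ht x y ⟨subset_closure hxy, hni⟩) (not_le.mpr hZpos)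
  obtain ⟨zt, zxx, zyy, zx, zy, hzt, hzx, hzxx, hzy, hzyy, hle⟩ := hpde t ht0 ht.2 x y hinterior hZpos
  set e := Real.exp (-k * t) with he
  have he0 : 0 < e := Real.exp_pos _
  have hdt : HasDerivAt (fun s => Φ η s x y) (e * (-k) * Z t x y + e * zt - η * 5) t := by
    have h1 : HasDerivAt (fun s : ℝ => Real.exp (-k * s)) (e * (-k)) t := by
      simpa [he] using ((hasDerivAt_id t).const_mul (-k)).exp
    have h2 : HasDerivAt (fun s : ℝ => η * (x ^ 2 + y ^ 2 + 5 * s)) (η * 5) t := by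
      simpa using (((hasDerivAt_id t).const_mul (5 : ℝ)).const_add (x ^ 2 + y ^ 2)).const_mul η
    exact (h1.mul hzt).sub h2
  have hnonneg := hdt.nonneg_of_le_left ht0
    fun s hs => hglob s ⟨hs.1, hs.2.trans ht.2⟩ x y hxy
  have hquad : ∀ a s : ℝ, HasDerivAt (fun ξ : ℝ => η * (ξ ^ 2 + a)) (η * (2 * s)) s := by
    intro a s
    simpa using (((hasDerivAt_id s).pow 2).add_const a).const_mul η
  have hlin : ∀ s : ℝ, HasDerivAt (fun ξ : ℝ => η * (2 * ξ)) (η * 2) s := by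
    intro s
    simpa using ((hasDerivAt_id s).const_mul (2 : ℝ)).const_mul η
  have hxx : e * zxx - η * 2 ≤ 0 := by
    refine IsLocalMax.second_deriv_nonpos (f := fun ξ => Φ η t ξ y)
      (f' := fun ξ => e * zx ξ - η * (2 * ξ)) (x := x) ?_ ?_ ((hzxx.const_mul e).sub (hlin x))
    · have hev : ∀ᶠ ξ in nhds x, (ξ, y) ∈ Ω :=
        (Continuous.continuousAt (by fun_prop : Continuous fun ξ : ℝ => (ξ, y))).eventually
          (mem_interior_iff_mem_nhds.mp hinterior)
      filter_upwards [hev] with ξ hξ using hglob t ht ξ y hξ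
    · intro ξ
      have := ((hzx ξ).const_mul e).sub (hquad (y ^ 2 + 5 * t) ξ)
      refine this.congr_of_eventuallyEq (Eventually.of_forall fun s => ?_)
      simp only [hΦ, ← he, Pi.sub_apply]
      ring
  have hyy : e * zyy - η * 2 ≤ 0 := by
    refine IsLocalMax.second_deriv_nonpos (f := fun ξ => Φ η t x ξ)
      (f' := fun ξ => e * zy ξ - η * (2 * ξ)) (x := y) ?_ ?_ ((hzyy.const_mul e).sub (hlin y))
    · have hev : ∀ᶠ ξ in nhds y, (x, ξ) ∈ Ω :=
        (Continuous.continuousAt (by fun_prop : Continuous fun ξ : ℝ => (x, ξ))).eventually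
          (mem_interior_iff_mem_nhds.mp hinterior)
      filter_upwards [hev] with ξ hξ using hglob t ht x ξ hξ
    · intro ξ
      have := ((hzy ξ).const_mul e).sub (hquad (x ^ 2 + 5 * t) ξ)
      refine this.congr_of_eventuallyEq (Eventually.of_forall fun s => ?_)
      simp only [hΦ, ← he, Pi.sub_apply]
      ring
  have := mul_le_mul_of_nonneg_left hle he0.le
  nlinarith

/-! ### The standing wave -/

/-- `m` is an increasing heteroclinic solution of `m'' + m - m ^ (2 n + 1) = 0` joining `-1` to `1`. -/
structure IsStandingWave (n : ℕ) (m : ℝ → ℝ) : Prop where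
  one_le : 1 ≤ n
  contDiff : ContDiff ℝ 2 m
  strictMono : StrictMono m
  ode : ∀ x, deriv (deriv m) x + m x - m x ^ (2 * n + 1) = 0
  tendsto_atTop : Tendsto m atTop (nhds 1)
  tendsto_atBot : Tendsto m atBot (nhds (-1))

/-- The linearization `f'(s)` of the reaction term `f(s) = s - s ^ (2 n + 1)`. -/
def reactionDeriv (n : ℕ) (s : ℝ) : ℝ := 1 - (2 * n + 1) * s ^ (2 * n)

theorem reactionDeriv_le_one (n : ℕ) (s : ℝ) : reactionDeriv n s ≤ 1 := by
  have : 0 ≤ s ^ (2 * n) := by rw [pow_mul]; positivity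
  unfold reactionDeriv
  nlinarith [mul_nonneg (by positivity : (0 : ℝ) ≤ 2 * n + 1) this]

/-- Lower bound for the double-well potential, in terms of `z = s ^ 2`. -/
theorem sq_one_sub_le_potential {n : ℕ} (hn : 1 ≤ n) {z : ℝ} (h0 : 0 ≤ z) (h1 : z ≤ 1) :
    (1 - z) ^ 2 ≤ (n + 1) * (1 - z) - (1 - z ^ (n + 1)) := by
  induction n, hn using Nat.le_induction with
  | base => norm_num; nlinarith
  | succ n hn ih =>
    have hp : z ^ (n + 1) ≤ 1 := pow_le_one₀ h0 h1
    push_cast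
    rw [pow_succ z (n + 1)]
    nlinarith [mul_nonneg (sub_nonneg.mpr h1) (sub_nonneg.mpr hp)]

/-- Quadratic remainder bound for the power function near the unit interval. -/
theorem abs_pow_taylor_le {a w : ℝ} (ha : |a| ≤ 1) (hw : |w| ≤ 1) (N : ℕ) :
    |(a + w) ^ (N + 1) - a ^ (N + 1) - (N + 1) * a ^ N * w| ≤ 4 ^ N * w ^ 2 := by
  induction N with
  | zero => norm_num; positivity
  | succ N ih =>
    have hsplit : (a + w) ^ (N + 1 + 1) - a ^ (N + 1 + 1) - ((N + 1 : ℕ) + 1) * a ^ (N + 1) * w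
        = (a + w) * ((a + w) ^ (N + 1) - a ^ (N + 1) - (N + 1) * a ^ N * w)
          + (N + 1) * a ^ N * w ^ 2 := by push_cast; ring
    rw [hsplit]
    have h2 : |a + w| ≤ 2 := (abs_add_le a w).trans (by linarith)
    have h3 : |a ^ N| ≤ 1 := by rw [abs_pow]; exact pow_le_one₀ (abs_nonneg a) ha
    have h4 : ((N : ℝ) + 1) ≤ 2 * 4 ^ N := by
      have : N + 1 ≤ 4 ^ N := Nat.lt_pow_self (by norm_num)
      have : ((N : ℝ) + 1) ≤ 4 ^ N := by exact_mod_cast this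
      linarith [pow_pos (by norm_num : (0 : ℝ) < 4) N]
    have hN : (0 : ℝ) ≤ N + 1 := by positivity
    calc _ ≤ |a + w| * |(a + w) ^ (N + 1) - a ^ (N + 1) - (N + 1) * a ^ N * w|
          + (N + 1) * |a ^ N| * w ^ 2 := by
            refine (abs_add_le _ _).trans_eq ?_
            rw [abs_mul, abs_mul, abs_mul, abs_of_nonneg hN, abs_of_nonneg (sq_nonneg w)]
      _ ≤ 2 * (4 ^ N * w ^ 2) + (2 * 4 ^ N) * 1 * w ^ 2 := by gcongr
      _ = 4 ^ (N + 1) * w ^ 2 := by ring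

namespace IsStandingWave

variable {n : ℕ} {m : ℝ → ℝ}

theorem lt_one (h : IsStandingWave n m) (x : ℝ) : m x < 1 :=
  (h.strictMono (lt_add_one x)).trans_le (h.strictMono.monotone.ge_of_tendsto h.tendsto_atTop _)

theorem neg_one_lt (h : IsStandingWave n m) (x : ℝ) : -1 < m x :=
  (h.strictMono.monotone.le_of_tendsto h.tendsto_atBot _).trans_lt (h.strictMono (sub_one_lt x))

theorem abs_le_one (h : IsStandingWave n m) (x : ℝ) : |m x| ≤ 1 :=
  abs_le.mpr ⟨(h.neg_one_lt x).le, (h.lt_one x).le⟩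

theorem sq_lt_one (h : IsStandingWave n m) (x : ℝ) : m x ^ 2 < 1 := by
  nlinarith [h.lt_one x, h.neg_one_lt x]

theorem hasDerivAt (h : IsStandingWave n m) (x : ℝ) : HasDerivAt m (deriv m x) x :=
  (h.contDiff.differentiable (by norm_num) x).hasDerivAt

theorem hasDerivAt_deriv (h : IsStandingWave n m) (x : ℝ) :
    HasDerivAt (deriv m) (m x ^ (2 * n + 1) - m x) x := by
  have hd : Differentiable ℝ (deriv m) :=
    (contDiff_succ_iff_deriv (n := 1).mp h.contDiff).2.2.differentiable (by norm_num)
  have := (hd x).hasDerivAt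
  rwa [show deriv (deriv m) x = m x ^ (2 * n + 1) - m x by linarith [h.ode x]] at this

theorem hasDerivAt_deriv_deriv (h : IsStandingWave n m) (x : ℝ) :
    HasDerivAt (fun y => m y ^ (2 * n + 1) - m y) (-reactionDeriv n (m x) * deriv m x) x := by
  have := ((h.hasDerivAt x).pow (2 * n + 1)).sub (h.hasDerivAt x)
  refine HasDerivAt.congr_deriv this ?_
  simp only [reactionDeriv, Nat.add_sub_cancel]
  push_cast
  ring

theorem continuous (h : IsStandingWave n m) : Continuous m := h.contDiff.continuous

theorem continuous_deriv (h : IsStandingWave n m) : Continuous (deriv m) :=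
  continuous_iff_continuousAt.mpr fun x => (h.hasDerivAt_deriv x).continuousAt

theorem deriv_nonneg (h : IsStandingWave n m) (x : ℝ) : 0 ≤ deriv m x :=
  h.strictMono.monotone.deriv_nonneg

/-- The first integral of the wave equation. -/
theorem energy (h : IsStandingWave n m) (x : ℝ) :
    (n + 1) * deriv m x ^ 2 = (n + 1) * (1 - m x ^ 2) - (1 - (m x ^ 2) ^ (n + 1)) := by
  set V : ℝ → ℝ := fun s => (n + 1) * (1 - s ^ 2) - (1 - (s ^ 2) ^ (n + 1)) with hV
  have hVc : Continuous V := by fun_prop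
  have hconst : ∀ x y : ℝ, (n + 1) * deriv m x ^ 2 - V (m x) = (n + 1) * deriv m y ^ 2 - V (m y) := by
    have hder : ∀ x, HasDerivAt (fun x => (n + 1) * deriv m x ^ 2 - V (m x)) 0 x := by
      intro x
      have h1 := ((h.hasDerivAt_deriv x).pow 2).const_mul ((n : ℝ) + 1)
      have h2 := ((((h.hasDerivAt x).pow 2).const_sub 1).const_mul ((n : ℝ) + 1)).sub
        ((((h.hasDerivAt x).pow 2).pow (n + 1)).const_sub 1)
      refine HasDerivAt.congr_deriv (h1.sub h2) ?_
      simp only [Nat.add_sub_cancel, Pi.pow_apply]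
      push_cast
      ring
    exact is_const_of_deriv_eq_zero (fun x => (hder x).differentiableAt) fun x => (hder x).deriv
  set E := (n + 1) * deriv m x ^ 2 - V (m x) with hE
  have hEV : ∀ y, (n + 1) * deriv m y ^ 2 = E + V (m y) := fun y => by linarith [hconst x y]
  have hV1 : Tendsto (fun y => E + V (m y)) atTop (nhds E) := by
    have := (hVc.tendsto 1).comp h.tendsto_atTop
    have hv : V 1 = 0 := by simp [hV]
    rw [hv] at this
    simpa using this.const_add E
  have hmvt : ∀ y : ℝ, ∃ ξ ∈ Set.Ioo y (y + 1), deriv m ξ = m (y + 1) - m y := by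
    intro y
    obtain ⟨ξ, hξ, he⟩ := exists_hasDerivAt_eq_slope m (deriv m) (lt_add_one y)
      h.continuous.continuousOn fun z _ => h.hasDerivAt z
    exact ⟨ξ, hξ, by simpa using he⟩
  choose ξ hξ hξd using hmvt
  have hξtop : Tendsto ξ atTop atTop := tendsto_atTop_mono (fun y => (hξ y).1.le) tendsto_id
  have hd0 : Tendsto (fun y => deriv m (ξ y)) atTop (nhds 0) := by
    have := (h.tendsto_atTop.comp (tendsto_atTop_add_const_right atTop (1 : ℝ) tendsto_id)).sub
      h.tendsto_atTop
    simp only [sub_self] at this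
    exact this.congr fun y => (hξd y).symm
  have hl1 : Tendsto (fun y => ((n : ℝ) + 1) * deriv m (ξ y) ^ 2) atTop (nhds E) :=
    (hV1.comp hξtop).congr fun y => (hEV (ξ y)).symm
  have hl2 : Tendsto (fun y => ((n : ℝ) + 1) * deriv m (ξ y) ^ 2) atTop (nhds 0) := by
    simpa using (hd0.pow 2).const_mul ((n : ℝ) + 1)
  have hE0 : E = 0 := tendsto_nhds_unique hl1 hl2
  rw [hEV x, hE0, zero_add]

theorem sq_one_sub_sq_le (h : IsStandingWave n m) (x : ℝ) :
    (1 - m x ^ 2) ^ 2 ≤ (n + 1) * deriv m x ^ 2 := by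
  rw [h.energy]
  exact sq_one_sub_le_potential h.one_le (sq_nonneg _) (h.sq_lt_one x).le

theorem deriv_pos (h : IsStandingWave n m) (x : ℝ) : 0 < deriv m x := by
  refine (h.deriv_nonneg x).lt_of_ne' fun h0 => ?_
  have := h.sq_one_sub_sq_le x
  rw [h0] at this
  have h2 : 0 < 1 - m x ^ 2 := by linarith [h.sq_lt_one x]
  nlinarith [pow_pos h2 2]

theorem deriv_sq_le (h : IsStandingWave n m) (x : ℝ) : deriv m x ^ 2 ≤ 1 - m x ^ 2 := by
  have h1 := h.energy x
  have h2 : (m x ^ 2) ^ (n + 1) ≤ 1 := pow_le_one₀ (sq_nonneg _) (h.sq_lt_one x).le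
  have hn : (0 : ℝ) < n + 1 := by positivity
  refine le_of_mul_le_mul_left ?_ hn
  linarith

theorem deriv_le_one (h : IsStandingWave n m) (x : ℝ) : deriv m x ≤ 1 := by
  nlinarith [h.deriv_sq_le x, sq_nonneg (m x), h.deriv_nonneg x]

theorem abs_second_deriv_le (h : IsStandingWave n m) (x : ℝ) :
    |m x ^ (2 * n + 1) - m x| ≤ n * (1 - m x ^ 2) := by
  have hz := (h.sq_lt_one x).le
  have h1 : (m x ^ 2) ^ n ≤ 1 := pow_le_one₀ (sq_nonneg _) hz
  have hb : 1 - (m x ^ 2) ^ n ≤ n * (1 - m x ^ 2) := by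
    have := one_add_mul_le_pow (a := m x ^ 2 - 1) (by nlinarith [sq_nonneg (m x)]) n
    simp only [add_sub_cancel] at this
    linarith
  have hfac : m x ^ (2 * n + 1) - m x = -(m x * (1 - (m x ^ 2) ^ n)) := by ring
  rw [hfac, abs_neg, abs_mul, abs_of_nonneg (sub_nonneg.mpr h1)]
  have := mul_le_mul (h.abs_le_one x) le_rfl (sub_nonneg.mpr h1) zero_le_one
  linarith

theorem abs_second_deriv_le_mul_deriv (h : IsStandingWave n m) (x : ℝ) :
    |m x ^ (2 * n + 1) - m x| ≤ n * (n + 1) * deriv m x := by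
  have h1 : 1 - m x ^ 2 ≤ (n + 1) * deriv m x := by
    refine le_of_sq_le_sq ?_ (mul_nonneg (by positivity) (h.deriv_nonneg x))
    calc _ ≤ ((n : ℝ) + 1) * deriv m x ^ 2 := h.sq_one_sub_sq_le x
      _ ≤ _ := by nlinarith [mul_nonneg (Nat.cast_nonneg (α := ℝ) n)
                    (mul_nonneg (by positivity : (0 : ℝ) ≤ n + 1) (sq_nonneg (deriv m x)))]
  have hn : (0 : ℝ) ≤ n := Nat.cast_nonneg n
  nlinarith [h.abs_second_deriv_le x, mul_le_mul_of_nonneg_left h1 hn]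

theorem tendsto_deriv (h : IsStandingWave n m) {l : Filter ℝ}
    (hl : Tendsto (fun x => m x ^ 2) l (nhds 1)) : Tendsto (deriv m) l (nhds 0) := by
  have h1 : Tendsto (fun x => 1 - m x ^ 2) l (nhds 0) := by simpa using hl.const_sub 1
  have h2 : Tendsto (fun x => deriv m x ^ 2) l (nhds 0) :=
    squeeze_zero (fun x => sq_nonneg _) h.deriv_sq_le h1
  have := h2.sqrt
  simp only [Real.sqrt_zero] at this
  exact this.congr fun x => Real.sqrt_sq (h.deriv_nonneg x)

theorem tendsto_sq_cocompact (h : IsStandingWave n m) :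
    Tendsto (fun x => m x ^ 2) (cocompact ℝ) (nhds 1) := by
  rw [cocompact_eq_atBot_atTop]
  refine Tendsto.sup ?_ ?_
  · simpa using h.tendsto_atBot.pow 2
  · simpa using h.tendsto_atTop.pow 2

/-- Outside a compact interval, a property holding near infinity holds. -/
theorem exists_forall_le_abs {p : ℝ → Prop} (hp : ∀ᶠ x in cocompact ℝ, p x) :
    ∃ X : ℝ, ∀ x, X ≤ |x| → p x := by
  rw [← Metric.cobounded_eq_cocompact, ← comap_norm_atTop (E := ℝ), eventually_comap] at hp
  obtain ⟨X, hX⟩ := eventually_atTop.mp hp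
  exact ⟨X, fun x hx => hX |x| hx x rfl⟩

theorem exists_deriv_lower_bound (h : IsStandingWave n m) (X : ℝ) :
    ∃ p > 0, ∀ x, |x| ≤ X → p ≤ deriv m x := by
  rcases lt_or_ge X 0 with hX | hX
  · exact ⟨1, one_pos, fun x hx => absurd (abs_nonneg x) (by linarith)⟩
  · obtain ⟨x₀, -, hmin⟩ := (isCompact_Icc (a := -X) (b := X)).exists_isMinOn
      ⟨0, by simpa using hX⟩ h.continuous_deriv.continuousOn
    exact ⟨deriv m x₀, h.deriv_pos x₀, fun x hx => hmin (abs_le.mp hx)⟩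

/-- The Lyapunov-type inequality behind the two-point barrier. -/
theorem exists_lyapunov (h : IsStandingWave n m) (lam : ℝ) (hlam : 0 ≤ lam) :
    ∃ K : ℝ, 0 ≤ K ∧ ∀ x y : ℝ, y ≤ x →
      -(K * (deriv m x * deriv m y * Real.exp (-lam * (x - y))))
        + reactionDeriv n (m y) * deriv m x + reactionDeriv n (m x) * deriv m y
        ≤ -(1 / 2) * (deriv m x + deriv m y) := by
  have hn1 : (1 : ℝ) ≤ n := by exact_mod_cast h.one_le
  have hlim : Tendsto (fun x => reactionDeriv n (m x)) (cocompact ℝ) (nhds (-2 * n)) := by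
    have := ((h.tendsto_sq_cocompact.pow n).const_mul (2 * (n : ℝ) + 1)).const_sub 1
    simp only [one_pow, mul_one, ← pow_mul] at this
    rwa [show 1 - (2 * (n : ℝ) + 1) = -2 * n by ring] at this
  obtain ⟨X, hX⟩ := exists_forall_le_abs (hlim.eventually_lt_const (by linarith : -2 * (n : ℝ) < -1))
  obtain ⟨p, hp, hpX⟩ := h.exists_deriv_lower_bound X
  obtain ⟨Y, hY⟩ := exists_forall_le_abs
    ((h.tendsto_deriv h.tendsto_sq_cocompact).eventually_lt_const (by positivity : 0 < p / 4))
  set X' := max X (max Y 0)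
  have hXX' : X ≤ X' := le_max_left _ _
  have hYX' : Y ≤ X' := (le_max_left _ _).trans (le_max_right _ _)
  have hX'0 : 0 ≤ X' := (le_max_right _ _).trans (le_max_right _ _)
  obtain ⟨q, hq, hqX⟩ := h.exists_deriv_lower_bound X'
  set K := 3 / (q ^ 2 * Real.exp (-lam * (2 * X'))) with hK
  have hK0 : 0 < K := by positivity
  refine ⟨K, hK0.le, fun x y hxy => ?_⟩
  have hx0 := h.deriv_pos x
  have hy0 := h.deriv_pos y
  have hx1 := h.deriv_le_one x
  have hy1 := h.deriv_le_one y
  have hax := reactionDeriv_le_one n (m x)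
  have hay := reactionDeriv_le_one n (m y)
  have hneg : 0 ≤ K * (deriv m x * deriv m y * Real.exp (-lam * (x - y))) := by positivity
  have hay' := mul_le_mul_of_nonneg_right hay hx0.le
  have hax' := mul_le_mul_of_nonneg_right hax hy0.le
  have hfar : ∀ a b : ℝ, X ≤ |a| → reactionDeriv n (m a) * deriv m b ≤ -1 * deriv m b :=
    fun a b ha => mul_le_mul_of_nonneg_right (hX a ha).le (h.deriv_nonneg b)
  by_cases hxX : |x| ≤ X'
  · by_cases hyX : |y| ≤ X'
    · have h1 : K * (q ^ 2 * Real.exp (-lam * (2 * X')))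
          ≤ K * (deriv m x * deriv m y * Real.exp (-lam * (x - y))) := by
        have hqx := hqX x hxX
        have hqy := hqX y hyX
        have hxyX : x - y ≤ 2 * X' := by linarith [(abs_le.mp hxX).2, (abs_le.mp hyX).1]
        rw [pow_two]
        gcongr ?_ * (?_ * ?_ * Real.exp ?_)
        nlinarith
      have h2 : K * (q ^ 2 * Real.exp (-lam * (2 * X'))) = 3 := by
        rw [hK]; field_simp
      linarith
    · have hyX' : X' ≤ |y| := (not_le.mp hyX).le
      have hfy := hfar y x (hXX'.trans hyX')
      rcases le_or_gt X |x| with hx | hx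
      · have hfx := hfar x y hx
        linarith
      · have := hpX x hx.le
        have := hY y (hYX'.trans hyX')
        linarith
  · have hxX' : X' ≤ |x| := (not_le.mp hxX).le
    have hfx := hfar x y (hXX'.trans hxX')
    rcases le_or_gt X |y| with hy | hy
    · have hfy := hfar y x hy
      linarith
    · have := hpX y hy.le
      have := hY x (hYX'.trans hxX')
      linarith

theorem abs_second_deriv_le_one (h : IsStandingWave n m) (x : ℝ) :
    |m x ^ (2 * n + 1) - m x| ≤ 1 := by
  have hz := (h.sq_lt_one x).le
  have h1 : (m x ^ 2) ^ n ≤ 1 := pow_le_one₀ (sq_nonneg _) hz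
  have h2 : 0 ≤ (m x ^ 2) ^ n := by positivity
  have hfac : m x ^ (2 * n + 1) - m x = -(m x * (1 - (m x ^ 2) ^ n)) := by ring
  rw [hfac, abs_neg, abs_mul, abs_of_nonneg (sub_nonneg.mpr h1)]
  exact mul_le_one₀ (h.abs_le_one x) (sub_nonneg.mpr h1) (by linarith)

theorem abs_sub_le (h : IsStandingWave n m) (x y : ℝ) : |m x - m y| ≤ |x - y| := by
  have := Convex.norm_image_sub_le_of_norm_hasDerivWithin_le (f := m) (C := 1) (s := Set.univ)
    (fun z _ => (h.hasDerivAt z).hasDerivWithinAt)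
    (fun z _ => by rw [Real.norm_of_nonneg (h.deriv_nonneg z)]; exact h.deriv_le_one z)
    convex_univ (Set.mem_univ y) (Set.mem_univ x)
  simpa using this

theorem abs_taylor_le (h : IsStandingWave n m) (x α : ℝ) :
    |m (x + α) - m x - α * deriv m x| ≤ α ^ 2 := by
  have hlip : ∀ a b, |deriv m a - deriv m b| ≤ |a - b| := by
    intro a b
    have := Convex.norm_image_sub_le_of_norm_hasDerivWithin_le (f := deriv m) (C := 1)
      (s := Set.univ) (fun z _ => (h.hasDerivAt_deriv z).hasDerivWithinAt)
      (fun z _ => h.abs_second_deriv_le_one z) convex_univ (Set.mem_univ b) (Set.mem_univ a)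
    simpa using this
  have := Convex.norm_image_sub_le_of_norm_hasDerivWithin_le (f := fun s => m (x + s) - s * deriv m x)
    (f' := fun s => deriv m (x + s) - deriv m x)
    (C := |α|) (s := Set.uIcc 0 α) (x := 0) (y := α)
    (fun s _ => by
      have h1 : HasDerivAt (fun s => m (x + s)) (deriv m (x + s)) s :=
        (h.hasDerivAt (x + s)).comp_const_add x s
      have h2 : HasDerivAt (fun s : ℝ => s * deriv m x) (deriv m x) s := by
        simpa using (hasDerivAt_id s).mul_const (deriv m x)
      exact (h1.sub h2).hasDerivWithinAt)
    (fun s hs => by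
      refine (hlip _ _).trans ?_
      simpa using Set.abs_sub_left_of_mem_uIcc hs)
    (convex_uIcc 0 α) Set.left_mem_uIcc Set.right_mem_uIcc
  simp only [Real.norm_eq_abs, add_zero, zero_mul, sub_zero] at this
  rw [abs_mul_abs_self, ← pow_two] at this
  convert this using 2
  ring

end IsStandingWave

/-! ### Decay of the linearized flow modulo translations -/

/-- The barrier dominating `w(x) m'(y) - w(y) m'(x)` for solutions `w` of the linearized equation. -/
noncomputable def twoPointBarrier (φ : ℝ → ℝ) (K lam x y : ℝ) : ℝ :=
  K * (φ x * φ y * (2 - Real.exp (-lam * (x - y)))) + φ x + φ y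

section Barrier

variable {φ ψ χ : ℝ → ℝ} {K lam : ℝ}

theorem hasDerivAt_exp_fst (lam x y : ℝ) : HasDerivAt (fun ξ : ℝ => Real.exp (-lam * (ξ - y)))
    (-lam * Real.exp (-lam * (x - y))) x := by
  refine HasDerivAt.congr_deriv
    ((((hasDerivAt_id x).sub_const y).const_mul (-lam)).exp) ?_
  simp; ring

theorem hasDerivAt_exp_snd (lam x y : ℝ) : HasDerivAt (fun ξ : ℝ => Real.exp (-lam * (x - ξ)))
    (lam * Real.exp (-lam * (x - y))) y := by
  refine HasDerivAt.congr_deriv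
    ((((hasDerivAt_id y).const_sub x).const_mul (-lam)).exp) ?_
  simp; ring

theorem hasDerivAt_twoPointBarrier_fst (hφ : ∀ x, HasDerivAt φ (ψ x) x) (x y : ℝ) :
    HasDerivAt (fun ξ => twoPointBarrier φ K lam ξ y)
      (K * φ y * (ψ x * (2 - Real.exp (-lam * (x - y)))
        + lam * (φ x * Real.exp (-lam * (x - y)))) + ψ x) x := by
  refine HasDerivAt.congr_deriv ((((((hφ x).mul_const (φ y)).mul
    ((hasDerivAt_exp_fst lam x y).const_sub 2)).const_mul K).add (hφ x)).add_const (φ y)) ?_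
  ring

theorem hasDerivAt_twoPointBarrier_snd (hφ : ∀ x, HasDerivAt φ (ψ x) x) (x y : ℝ) :
    HasDerivAt (fun ξ => twoPointBarrier φ K lam x ξ)
      (K * φ x * (ψ y * (2 - Real.exp (-lam * (x - y)))
        - lam * (φ y * Real.exp (-lam * (x - y)))) + ψ y) y := by
  refine HasDerivAt.congr_deriv ((((((hφ y).const_mul (φ x)).mul
    ((hasDerivAt_exp_snd lam x y).const_sub 2)).const_mul K).add_const (φ x)).add (hφ y)) ?_
  ring

theorem hasDerivAt_twoPointBarrier_fst_fst (hφ : ∀ x, HasDerivAt φ (ψ x) x)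
    (hψ : ∀ x, HasDerivAt ψ (χ x) x) (x y : ℝ) :
    HasDerivAt (fun x => K * φ y * (ψ x * (2 - Real.exp (-lam * (x - y)))
        + lam * (φ x * Real.exp (-lam * (x - y)))) + ψ x)
      (K * φ y * (χ x * (2 - Real.exp (-lam * (x - y)))
        + 2 * lam * ψ x * Real.exp (-lam * (x - y))
        - lam ^ 2 * φ x * Real.exp (-lam * (x - y))) + χ x) x := by
  refine HasDerivAt.congr_deriv (((((hψ x).mul ((hasDerivAt_exp_fst lam x y).const_sub 2)).add
    (((hφ x).mul (hasDerivAt_exp_fst lam x y)).const_mul lam)).const_mul (K * φ y)).add (hψ x)) ?_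
  ring

theorem hasDerivAt_twoPointBarrier_snd_snd (hφ : ∀ x, HasDerivAt φ (ψ x) x)
    (hψ : ∀ x, HasDerivAt ψ (χ x) x) (x y : ℝ) :
    HasDerivAt (fun y => K * φ x * (ψ y * (2 - Real.exp (-lam * (x - y)))
        - lam * (φ y * Real.exp (-lam * (x - y)))) + ψ y)
      (K * φ x * (χ y * (2 - Real.exp (-lam * (x - y)))
        - 2 * lam * ψ y * Real.exp (-lam * (x - y))
        - lam ^ 2 * φ y * Real.exp (-lam * (x - y))) + χ y) y := by
  refine HasDerivAt.congr_deriv (((((hψ y).mul ((hasDerivAt_exp_snd lam x y).const_sub 2)).sub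
    (((hφ y).mul (hasDerivAt_exp_snd lam x y)).const_mul lam)).const_mul (K * φ x)).add (hψ y)) ?_
  ring

end Barrier

/-- `w` is a classical solution on `t > 0` of `w_t = w_xx + g`, continuous up to `t = 0` and locally
bounded in time. -/
structure IsHeatSolution (w wt wx wxx g : ℝ → ℝ → ℝ) : Prop where
  continuousOn : ContinuousOn (fun p : ℝ × ℝ => w p.1 p.2) {p : ℝ × ℝ | 0 ≤ p.1}
  bounded : ∀ T > (0 : ℝ), ∃ M : ℝ, ∀ t ∈ Set.Icc (0 : ℝ) T, ∀ x : ℝ, |w t x| ≤ M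
  hasDerivAt_time : ∀ t, 0 < t → ∀ x, HasDerivAt (fun s => w s x) (wt t x) t
  hasDerivAt_space : ∀ t, 0 < t → ∀ x, HasDerivAt (fun y => w t y) (wx t x) x
  hasDerivAt_space_space : ∀ t, 0 < t → ∀ x, HasDerivAt (fun y => wx t y) (wxx t x) x
  eqn : ∀ t, 0 < t → ∀ x, wt t x = wxx t x + g t x

namespace IsHeatSolution

variable {w wt wx wxx g : ℝ → ℝ → ℝ}

theorem neg (hw : IsHeatSolution w wt wx wxx g) :
    IsHeatSolution (fun t x => -w t x) (fun t x => -wt t x) (fun t x => -wx t x)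
      (fun t x => -wxx t x) (fun t x => -g t x) where
  continuousOn := hw.continuousOn.neg
  bounded T hT := by simpa using hw.bounded T hT
  hasDerivAt_time t ht x := (hw.hasDerivAt_time t ht x).neg
  hasDerivAt_space t ht x := (hw.hasDerivAt_space t ht x).neg
  hasDerivAt_space_space t ht x := (hw.hasDerivAt_space_space t ht x).neg
  eqn t ht x := by rw [hw.eqn t ht x]; ring

theorem shift (hw : IsHeatSolution w wt wx wxx g) {s : ℝ} (hs : 0 ≤ s) (θ : ℝ) :
    IsHeatSolution (fun t x => w (t + s) (x + θ)) (fun t x => wt (t + s) (x + θ))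
      (fun t x => wx (t + s) (x + θ)) (fun t x => wxx (t + s) (x + θ))
      (fun t x => g (t + s) (x + θ)) where
  continuousOn := hw.continuousOn.comp (f := fun p : ℝ × ℝ => (p.1 + s, p.2 + θ)) (by fun_prop)
    fun p hp => add_nonneg hp hs
  bounded T hT := by
    obtain ⟨M, hM⟩ := hw.bounded (T + s) (by linarith)
    exact ⟨M, fun t ht x => hM _ ⟨add_nonneg ht.1 hs, by linarith [ht.2]⟩ _⟩
  hasDerivAt_time t ht x := (hw.hasDerivAt_time (t + s) (by linarith) (x + θ)).comp_add_const t s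
  hasDerivAt_space t ht x := (hw.hasDerivAt_space (t + s) (by linarith) (x + θ)).comp_add_const x θ
  hasDerivAt_space_space t ht x :=
    (hw.hasDerivAt_space_space (t + s) (by linarith) (x + θ)).comp_add_const x θ
  eqn t ht x := hw.eqn (t + s) (by linarith) (x + θ)

/-- A subsolution in the region where it exceeds `d e ^ t` stays below `d e ^ t`. -/
theorem le_mul_exp (hw : IsHeatSolution w wt wx wxx g) {d : ℝ} (hd : 0 ≤ d)
    (hinit : ∀ x, w 0 x ≤ d) (hg : ∀ t, 0 < t → ∀ x, 0 < w t x → g t x ≤ w t x) :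
    ∀ t, 0 ≤ t → ∀ x, w t x ≤ d * Real.exp t := by
  intro t ht x
  obtain ⟨M, hM⟩ := hw.bounded (t + 1) (by linarith)
  have := parabolic_max_principle (Z := fun t x _ => w t x - d * Real.exp t) (Ω := Set.univ)
    (T := t) (k := 1) (M := M) isClosed_univ
    ((hw.continuousOn.comp (f := fun p : ℝ × ℝ × ℝ => (p.1, p.2.1)) (by fun_prop)
      fun p hp => hp.1.1).sub (by fun_prop))
    (fun s hs x _ _ => by
      have h1 := (abs_le.mp (hM s ⟨hs.1, by linarith [hs.2]⟩ x)).2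
      have h2 : 0 ≤ d * Real.exp s := by positivity
      linarith)
    (fun x _ _ => by simpa using hinit x)
    (fun _ _ _ _ h => by simp at h)
    (fun s hs _ x y _ hpos => by
      refine ⟨wt s x - d * Real.exp s, wxx s x, 0, fun ξ => wx s ξ, fun _ => 0,
        (hw.hasDerivAt_time s hs x).sub ((Real.hasDerivAt_exp s).const_mul d),
        fun ξ => (hw.hasDerivAt_space s hs ξ).sub_const _, hw.hasDerivAt_space_space s hs x,
        fun ξ => hasDerivAt_const _ _, hasDerivAt_const _ _, ?_⟩
      have h2 : 0 ≤ d * Real.exp s := by positivity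
      have := hg s hs x (by linarith)
      have := hw.eqn s hs x
      linarith) t ⟨ht, le_rfl⟩ x 0 (Set.mem_univ _)
  simpa using this

end IsHeatSolution

namespace IsStandingWave

variable {n : ℕ} {m : ℝ → ℝ}

/-- Strict supersolution property of the two-point barrier. -/
theorem exists_twoPointBarrier (h : IsStandingWave n m) :
    ∃ K lam c : ℝ, 0 ≤ K ∧ 0 < c ∧ ∀ x y : ℝ, y ≤ x →
      K * (2 * lam * Real.exp (-lam * (x - y)) *
          ((m x ^ (2 * n + 1) - m x) * deriv m y - (m y ^ (2 * n + 1) - m y) * deriv m x)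
        - 2 * lam ^ 2 * (deriv m x * deriv m y * Real.exp (-lam * (x - y))))
        + reactionDeriv n (m y) * deriv m x + reactionDeriv n (m x) * deriv m y
        ≤ -c * twoPointBarrier (deriv m) K lam x y ∧
      deriv m x + deriv m y ≤ twoPointBarrier (deriv m) K lam x y ∧
      twoPointBarrier (deriv m) K lam x y ≤ 2 * (2 * K + 1) := by
  set B : ℝ := n * (n + 1) with hB
  have hn1 : (1 : ℝ) ≤ n := by exact_mod_cast h.one_le
  have hB1 : 1 ≤ B := by nlinarith
  set lam := 4 * B with hlam
  obtain ⟨K, hK, hlyap⟩ := h.exists_lyapunov lam (by linarith)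
  refine ⟨K, lam, 1 / 2 / (2 * K + 1), hK, by positivity, fun x y hxy => ?_⟩
  have hx0 := h.deriv_pos x
  have hy0 := h.deriv_pos y
  have hx1 := h.deriv_le_one x
  have hy1 := h.deriv_le_one y
  set e := Real.exp (-lam * (x - y)) with he
  have he0 : 0 < e := Real.exp_pos _
  have he1 : e ≤ 1 := Real.exp_le_one_iff.mpr (by nlinarith)
  set p := deriv m x * deriv m y with hp
  have hp0 : 0 < p := mul_pos hx0 hy0
  have hpx : p ≤ deriv m x := by nlinarith
  have hlow : deriv m x + deriv m y ≤ twoPointBarrier (deriv m) K lam x y := by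
    have : 0 ≤ K * (p * (2 - e)) := mul_nonneg hK (mul_nonneg hp0.le (by linarith))
    unfold twoPointBarrier
    linarith
  have hup : twoPointBarrier (deriv m) K lam x y ≤ (2 * K + 1) * (deriv m x + deriv m y) := by
    have h1 : p * (2 - e) ≤ 2 * (deriv m x + deriv m y) := by nlinarith
    have := mul_le_mul_of_nonneg_left h1 hK
    unfold twoPointBarrier
    linarith
  refine ⟨?_, hlow, hup.trans (by nlinarith)⟩
  have hdrift : (m x ^ (2 * n + 1) - m x) * deriv m y - (m y ^ (2 * n + 1) - m y) * deriv m x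
      ≤ 2 * B * p := by
    have h1 := mul_le_mul_of_nonneg_right
      ((le_abs_self _).trans (h.abs_second_deriv_le_mul_deriv x)) hy0.le
    have h2 := mul_le_mul_of_nonneg_right
      ((neg_le_abs _).trans (h.abs_second_deriv_le_mul_deriv y)) hx0.le
    rw [← hB] at h1 h2
    linarith
  have hpe : 0 < p * e := mul_pos hp0 he0
  have hterm : 2 * lam * e *
      ((m x ^ (2 * n + 1) - m x) * deriv m y - (m y ^ (2 * n + 1) - m y) * deriv m x)
        - 2 * lam ^ 2 * (p * e) ≤ -(p * e) := by
    have h1 := mul_le_mul_of_nonneg_left hdrift (by positivity : 0 ≤ 2 * lam * e)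
    have h2 : 2 * lam * e * (2 * B * p) - 2 * lam ^ 2 * (p * e) = -(16 * B ^ 2) * (p * e) := by
      rw [hlam]; ring
    have h3 := mul_le_mul_of_nonneg_right (by nlinarith : 1 ≤ 16 * B ^ 2) hpe.le
    linarith
  have hmul := mul_le_mul_of_nonneg_left hterm hK
  have hly := hlyap x y hxy
  have hfin : -(1 / 2) * (deriv m x + deriv m y)
      ≤ -(1 / 2 / (2 * K + 1)) * twoPointBarrier (deriv m) K lam x y := by
    have := mul_le_mul_of_nonneg_left hup (by positivity : 0 ≤ 1 / 2 / (2 * K + 1))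
    have h2 : 1 / 2 / (2 * K + 1) * ((2 * K + 1) * (deriv m x + deriv m y))
        = 1 / 2 * (deriv m x + deriv m y) := by field_simp
    linarith
  linarith

/-- Approximate solutions of the linearized equation become proportional to `m'` exponentially
fast. -/
theorem exists_linear_decay (h : IsStandingWave n m) :
    ∃ c > 0, ∃ C > 0, ∀ (w wt wx wxx g : ℝ → ℝ → ℝ) (T d ε : ℝ), IsHeatSolution w wt wx wxx g →
      0 < T → 0 ≤ d → 0 ≤ ε → (∀ x, |w 0 x| ≤ d) →
      (∀ t, 0 < t → t ≤ T → ∀ x, |g t x - reactionDeriv n (m x) * w t x| ≤ ε) →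
      ∀ x, |w T x - w T 0 / deriv m 0 * deriv m x| ≤ C * (d * Real.exp (-c * T) + ε) := by
  obtain ⟨K, lam, c, hK, hc, hP⟩ := h.exists_twoPointBarrier
  set P := twoPointBarrier (deriv m) K lam with hPdef
  have hone : ∀ (w wt wx wxx g : ℝ → ℝ → ℝ) (T d ε : ℝ), IsHeatSolution w wt wx wxx g →
      0 < T → 0 ≤ d → 0 ≤ ε → (∀ x, |w 0 x| ≤ d) →
      (∀ t, 0 < t → t ≤ T → ∀ x, |g t x - reactionDeriv n (m x) * w t x| ≤ ε) →
      ∀ x y, y ≤ x → w T x * deriv m y - w T y * deriv m x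
        ≤ (d * Real.exp (-c * T) + ε / c) * P x y := by
    intro w wt wx wxx g T d ε hw hT hd hε hinit hg x y hxy
    obtain ⟨M, hM⟩ := hw.bounded T hT
    have hPcont : Continuous fun p : ℝ × ℝ × ℝ => P p.2.1 p.2.2 := by
      have := h.continuous_deriv
      simp only [hPdef, twoPointBarrier]
      fun_prop
    have hD : ∀ a b x y : ℝ, ∀ r, |a| ≤ r → |b| ≤ r →
        a * deriv m y - b * deriv m x ≤ r * (deriv m x + deriv m y) := by
      intro a b x y r ha hb
      have h1 := mul_le_mul_of_nonneg_right (abs_le.mp ha).2 (h.deriv_nonneg y)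
      have h2 := mul_le_mul_of_nonneg_right (abs_le.mp hb).1 (h.deriv_nonneg x)
      linarith
    have hApos : ∀ t, 0 ≤ d * Real.exp (-c * t) + ε / c := fun t => by positivity
    have hPpos : ∀ x y, y ≤ x → 0 ≤ P x y := fun x y hxy =>
      (add_nonneg (h.deriv_nonneg x) (h.deriv_nonneg y)).trans (hP x y hxy).2.1
    have key := parabolic_max_principle
      (Z := fun t x y => w t x * deriv m y - w t y * deriv m x
        - (d * Real.exp (-c * t) + ε / c) * P x y)
      (Ω := {p : ℝ × ℝ | p.2 ≤ p.1}) (T := T) (k := 2) (M := |M| * 2)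
      (isClosed_le continuous_snd continuous_fst)
      (by
        have h1 : ContinuousOn (fun p : ℝ × ℝ × ℝ => w p.1 p.2.1)
            (Set.Icc 0 T ×ˢ {p : ℝ × ℝ | p.2 ≤ p.1}) :=
          hw.continuousOn.comp (f := fun p : ℝ × ℝ × ℝ => (p.1, p.2.1)) (by fun_prop)
            fun p hp => hp.1.1
        have h2 : ContinuousOn (fun p : ℝ × ℝ × ℝ => w p.1 p.2.2)
            (Set.Icc 0 T ×ˢ {p : ℝ × ℝ | p.2 ≤ p.1}) :=
          hw.continuousOn.comp (f := fun p : ℝ × ℝ × ℝ => (p.1, p.2.2)) (by fun_prop)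
            fun p hp => hp.1.1
        have h3 := h.continuous_deriv
        exact ((h1.mul (by fun_prop)).sub (h2.mul (by fun_prop))).sub
          (ContinuousOn.mul (by fun_prop) hPcont.continuousOn))
      (fun t ht x y hxy => by
        have h1 := hD (w t x) (w t y) x y |M| ((hM t ht x).trans (le_abs_self M))
          ((hM t ht y).trans (le_abs_self M))
        have h2 := mul_nonneg (hApos t) (hPpos x y hxy)
        have h3 := mul_le_mul_of_nonneg_left
          (add_le_add (h.deriv_le_one x) (h.deriv_le_one y)) (abs_nonneg M)
        linarith)
      (fun x y hxy => by
        have h1 := hD (w 0 x) (w 0 y) x y d (hinit x) (hinit y)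
        have h2 := mul_le_mul_of_nonneg_left (hP x y hxy).2.1 hd
        have h3 := mul_nonneg (by positivity : 0 ≤ ε / c) (hPpos x y hxy)
        simp only [mul_zero, Real.exp_zero, mul_one]
        linarith)
      (fun t _ x y hxy => by
        have hxy' : y = x := frontier_le_subset_eq continuous_snd continuous_fst hxy
        subst hxy'
        have := mul_nonneg (hApos t) (hPpos y y le_rfl)
        linarith)
      (fun t ht htT x y hinterior hpos => by
        have hxy : (x, y) ∈ {p : ℝ × ℝ | p.2 ≤ p.1} := interior_subset hinterior
        replace hxy : y ≤ x := hxy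
        have hder := h.hasDerivAt_deriv
        have hder2 := h.hasDerivAt_deriv_deriv
        have hA : HasDerivAt (fun s => d * Real.exp (-c * s) + ε / c)
            (-c * (d * Real.exp (-c * t))) t := by
          refine HasDerivAt.congr_deriv
            (((((hasDerivAt_id t).const_mul (-c)).exp).const_mul d).add_const (ε / c)) ?_
          simp; ring
        refine ⟨_, _, _, _, _,
          (((hw.hasDerivAt_time t ht x).mul_const (deriv m y)).sub
            ((hw.hasDerivAt_time t ht y).mul_const (deriv m x))).sub (hA.mul_const (P x y)),
          fun ξ => (((hw.hasDerivAt_space t ht ξ).mul_const (deriv m y)).sub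
            ((hder ξ).const_mul (w t y))).sub
            ((hasDerivAt_twoPointBarrier_fst hder ξ y).const_mul _),
          (((hw.hasDerivAt_space_space t ht x).mul_const (deriv m y)).sub
            ((hder2 x).const_mul (w t y))).sub
            ((hasDerivAt_twoPointBarrier_fst_fst hder hder2 x y).const_mul _),
          fun ξ => (((hder ξ).const_mul (w t x)).sub
            ((hw.hasDerivAt_space t ht ξ).mul_const (deriv m x))).sub
            ((hasDerivAt_twoPointBarrier_snd hder x ξ).const_mul _),
          (((hder2 y).const_mul (w t x)).sub
            ((hw.hasDerivAt_space_space t ht y).mul_const (deriv m x))).sub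
            ((hasDerivAt_twoPointBarrier_snd_snd hder hder2 x y).const_mul _), ?_⟩
        have hsrc := hD _ _ x y ε (hg t ht htT x) (hg t ht htT y)
        obtain ⟨hP1, hP2, -⟩ := hP x y hxy
        have hsup := mul_le_mul_of_nonneg_left hP1 (hApos t)
        have hsrc2 := mul_le_mul_of_nonneg_left hP2 hε
        have hεc : ε / c * c = ε := div_mul_cancel₀ ε hc.ne'
        have hzer : (reactionDeriv n (m x) + reactionDeriv n (m y)) *
            (w t x * deriv m y - w t y * deriv m x - (d * Real.exp (-c * t) + ε / c) * P x y)
            ≤ 2 * (w t x * deriv m y - w t y * deriv m x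
              - (d * Real.exp (-c * t) + ε / c) * P x y) :=
          mul_le_mul_of_nonneg_right
            (by linarith [reactionDeriv_le_one n (m x), reactionDeriv_le_one n (m y)]) hpos.le
        refine le_trans ?_ hzer
        rw [hw.eqn t ht x, hw.eqn t ht y]
        have hAc : (d * Real.exp (-c * t) + ε / c) * (-c * P x y)
            = -c * (d * Real.exp (-c * t)) * P x y - ε * P x y := by
          linear_combination -P x y * hεc
        rw [hAc] at hsup
        generalize hAt : d * Real.exp (-c * t) + ε / c = A at *
        have hPval : P x y = K * (deriv m x * deriv m y * (2 - Real.exp (-lam * (x - y))))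
            + deriv m x + deriv m y := rfl
        generalize hQ : -c * (d * Real.exp (-c * t)) * P x y = Q at *
        have hAP := congrArg (fun s =>
          (reactionDeriv n (m x) + reactionDeriv n (m y)) * (A * s)) hPval
        linarith)
    have := key T ⟨hT.le, le_rfl⟩ x y hxy
    linarith
  have hφ0 := h.deriv_pos 0
  set C₀ := 2 * (2 * K + 1) with hC₀
  have hC₀pos : 0 < C₀ := by positivity
  refine ⟨c, hc, C₀ * (1 + 1 / c) / deriv m 0, by positivity, ?_⟩
  intro w wt wx wxx g T d ε hw hT hd hε hinit hg x
  have hA0 : 0 ≤ d * Real.exp (-c * T) + ε / c := by positivity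
  have h1 := hone w wt wx wxx g T d ε hw hT hd hε hinit hg
  have h2 := hone _ _ _ _ _ T d ε hw.neg hT hd hε (by simpa using hinit) (by
    intro t ht htT x
    rw [show -g t x - reactionDeriv n (m x) * -w t x
      = -(g t x - reactionDeriv n (m x) * w t x) by ring, abs_neg]
    exact hg t ht htT x)
  have h3 : ∀ x y, y ≤ x → |w T x * deriv m y - w T y * deriv m x|
      ≤ (d * Real.exp (-c * T) + ε / c) * C₀ := by
    intro x y hxy
    have hle := mul_le_mul_of_nonneg_left (hP x y hxy).2.2 hA0
    refine abs_le.mpr ⟨?_, (h1 x y hxy).trans hle⟩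
    have := (h2 x y hxy).trans hle
    linarith
  have h4 : |w T x * deriv m 0 - w T 0 * deriv m x| ≤ (d * Real.exp (-c * T) + ε / c) * C₀ := by
    rcases le_total 0 x with hx | hx
    · exact h3 x 0 hx
    · rw [abs_sub_comm]
      exact h3 0 x hx
  have h5 : w T x - w T 0 / deriv m 0 * deriv m x
      = (w T x * deriv m 0 - w T 0 * deriv m x) / deriv m 0 := by field_simp
  rw [h5, abs_div, abs_of_pos hφ0, div_mul_eq_mul_div]
  refine div_le_div_of_nonneg_right (h4.trans ?_) hφ0.le
  have h6 : 0 ≤ d * Real.exp (-c * T) * (1 / c) := by positivity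
  have h7 : ε / c = ε * (1 / c) := by ring
  rw [mul_comm, h7, mul_assoc C₀]
  refine mul_le_mul_of_nonneg_left ?_ hC₀pos.le
  nlinarith

end IsStandingWave

/-! ### Nonlinear contraction and convergence -/

namespace IsStandingWave

variable {n : ℕ} {m : ℝ → ℝ}

/-- The perturbation `u - m` of an Allen–Cahn solution solves a heat equation. -/
theorem isHeatSolution_sub (h : IsStandingWave n m) {u ut ux uxx : ℝ → ℝ → ℝ}
    (hu : IsHeatSolution u ut ux uxx fun t x => u t x - u t x ^ (2 * n + 1)) :
    IsHeatSolution (fun t x => u t x - m x) ut (fun t x => ux t x - deriv m x)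
      (fun t x => uxx t x - (m x ^ (2 * n + 1) - m x))
      (fun t x => u t x - u t x ^ (2 * n + 1) + (m x ^ (2 * n + 1) - m x)) where
  continuousOn := by
    have := h.continuous
    exact hu.continuousOn.sub (by fun_prop)
  bounded T hT := by
    obtain ⟨M, hM⟩ := hu.bounded T hT
    exact ⟨M + 1, fun t ht x => (abs_sub _ _).trans (add_le_add (hM t ht x) (h.abs_le_one x))⟩
  hasDerivAt_time t ht x := (hu.hasDerivAt_time t ht x).sub_const _
  hasDerivAt_space t ht x := (hu.hasDerivAt_space t ht x).sub (h.hasDerivAt x)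
  hasDerivAt_space_space t ht x := (hu.hasDerivAt_space_space t ht x).sub (h.hasDerivAt_deriv x)
  eqn t ht x := by rw [hu.eqn t ht x]; ring

theorem abs_sub_le_mul_exp (h : IsStandingWave n m) {u ut ux uxx : ℝ → ℝ → ℝ}
    (hu : IsHeatSolution u ut ux uxx fun t x => u t x - u t x ^ (2 * n + 1)) {d : ℝ} (hd : 0 ≤ d)
    (hinit : ∀ x, |u 0 x - m x| ≤ d) (t : ℝ) (ht : 0 ≤ t) (x : ℝ) :
    |u t x - m x| ≤ d * Real.exp t := by
  have hw := h.isHeatSolution_sub hu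
  have hmono : Monotone fun s : ℝ => s ^ (2 * n + 1) := (odd_two_mul_add_one n).strictMono_pow.monotone
  refine abs_le.mpr ⟨?_, ?_⟩
  · have := hw.neg.le_mul_exp hd (fun x => by linarith [(abs_le.mp (hinit x)).1]) (by
      intro t _ x hpos
      have := hmono (by linarith : u t x ≤ m x)
      simp only at this
      linarith) t ht x
    linarith
  · exact hw.le_mul_exp hd (fun x => (abs_le.mp (hinit x)).2) (by
      intro t _ x hpos
      have := hmono (by linarith : m x ≤ u t x)
      simp only at this
      linarith) t ht x

/-- After a fixed time, the distance to the family of translates is halved. -/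
theorem exists_contraction (h : IsStandingWave n m) :
    ∃ T > 0, ∃ A > 0, ∃ β > 0, ∀ (u ut ux uxx : ℝ → ℝ → ℝ) (d : ℝ),
      IsHeatSolution u ut ux uxx (fun t x => u t x - u t x ^ (2 * n + 1)) →
      0 ≤ d → d ≤ β → (∀ x, |u 0 x - m x| ≤ d) →
      ∃ α, |α| ≤ A * d ∧ ∀ x, |u T x - m (x - α)| ≤ d / 2 := by
  obtain ⟨c, hc, C, hC, hdecay⟩ := h.exists_linear_decay
  obtain ⟨T, hT, hTC⟩ : ∃ T > 0, C * Real.exp (-c * T) ≤ 1 / 8 := by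
    have hlim : Tendsto (fun T => C * Real.exp (-c * T)) atTop (nhds 0) := by
      have h1 : Tendsto (fun T => -c * T) atTop atBot :=
        tendsto_id.const_mul_atTop_of_neg (neg_lt_zero.mpr hc)
      simpa using (Real.tendsto_exp_atBot.comp h1).const_mul C
    obtain ⟨T, hT1, hT2⟩ := ((hlim.eventually_lt_const (by norm_num : (0 : ℝ) < 1 / 8)).and
      (eventually_gt_atTop 0)).exists
    exact ⟨T, hT2, hT1.le⟩
  have hφ0 := h.deriv_pos 0
  set A := Real.exp T / deriv m 0 with hA
  have hA0 : 0 < A := by positivity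
  set L := C * (4 ^ (2 * n) * Real.exp T ^ 2) + A ^ 2 with hL
  have hL0 : 0 < L := by positivity
  refine ⟨T, hT, A, hA0, min (Real.exp (-T)) (1 / (4 * L)), by positivity, ?_⟩
  intro u ut ux uxx d hu hd hdβ hinit
  have hd1 : d * Real.exp T ≤ 1 := by
    have := mul_le_mul_of_nonneg_right (hdβ.trans (min_le_left _ _)) (Real.exp_pos T).le
    rwa [← Real.exp_add, neg_add_cancel, Real.exp_zero] at this
  have hd2 : L * d ≤ 1 / 4 := by
    have := mul_le_mul_of_nonneg_left (hdβ.trans (min_le_right _ _)) hL0.le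
    rwa [show L * (1 / (4 * L)) = 1 / 4 by field_simp] at this
  have hgrow := h.abs_sub_le_mul_exp hu hd hinit
  have hgrow' : ∀ t, 0 ≤ t → t ≤ T → ∀ x, |u t x - m x| ≤ d * Real.exp T := fun t ht htT x =>
    (hgrow t ht x).trans (mul_le_mul_of_nonneg_left (Real.exp_le_exp.mpr htT) hd)
  have hlin := hdecay _ _ _ _ _ T d (4 ^ (2 * n) * (d * Real.exp T) ^ 2)
    (h.isHeatSolution_sub hu) hT hd (by positivity) hinit (by
      intro t ht htT x
      have hw := hgrow' t ht.le htT x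
      have htaylor := abs_pow_taylor_le (h.abs_le_one x) (hw.trans hd1) (2 * n)
      have hsq : (u t x - m x) ^ 2 ≤ (d * Real.exp T) ^ 2 := sq_le_sq' (abs_le.mp hw).1 (abs_le.mp hw).2
      refine le_trans (le_of_eq ?_)
        (htaylor.trans (mul_le_mul_of_nonneg_left hsq (by positivity)))
      rw [← abs_neg]
      congr 1
      simp only [reactionDeriv]
      push_cast
      rw [add_sub_cancel]
      ring)
  set a := (u T 0 - m 0) / deriv m 0 with ha
  have haA : |a| ≤ A * d := by
    rw [ha, abs_div, abs_of_pos hφ0, hA, div_mul_eq_mul_div]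
    refine div_le_div_of_nonneg_right ?_ hφ0.le
    linarith [hgrow' T hT.le le_rfl 0]
  refine ⟨-a, by rwa [abs_neg], fun x => ?_⟩
  have h1 := hlin x
  have h2 := h.abs_taylor_le x a
  have h3 : a ^ 2 ≤ (A * d) ^ 2 := sq_le_sq' (abs_le.mp haA).1 (abs_le.mp haA).2
  have h4 : |u T x - m (x - -a)| ≤ |u T x - m x - a * deriv m x|
      + |m (x + a) - m x - a * deriv m x| := by
    refine (le_of_eq ?_).trans (abs_sub _ _)
    rw [sub_neg_eq_add]
    congr 1
    ring
  have h5 := mul_le_mul_of_nonneg_right hTC hd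
  have h6 := mul_le_mul_of_nonneg_right hd2 hd
  rw [hL] at h6
  nlinarith

/-- Exponential convergence to a single translate, in pointwise form. -/
theorem exists_convergence (h : IsStandingWave n m) :
    ∃ β > 0, ∃ c > 0, ∃ C > 0, ∀ (u ut ux uxx : ℝ → ℝ → ℝ) (d θ : ℝ),
      IsHeatSolution u ut ux uxx (fun t x => u t x - u t x ^ (2 * n + 1)) →
      0 ≤ d → d ≤ β → (∀ x, |u 0 x - m (x - θ)| ≤ d) →
      ∃ ζ, ∀ t, 0 ≤ t → ∀ x, |u t x - m (x - ζ)| ≤ C * Real.exp (-c * t) * d := by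
  obtain ⟨T, hT, A, hA, β, hβ, hstep⟩ := h.exists_contraction
  refine ⟨β, hβ, Real.log 2 / T, div_pos (Real.log_pos one_lt_two) hT,
    2 * (Real.exp T + 2 * A), by positivity, ?_⟩
  intro u ut ux uxx d θ₀ hu hd hdβ hinit
  have hshift : ∀ (k : ℕ) (θ : ℝ), (∀ x, |u (k * T) x - m (x - θ)| ≤ d / 2 ^ k) →
      ∀ x, |u (0 + k * T) (x + θ) - m x| ≤ d / 2 ^ k := by
    intro k θ hk x
    simpa using hk (x + θ)
  have hiter : ∀ (k : ℕ) (θ : ℝ), ∃ θ', (∀ x, |u (k * T) x - m (x - θ)| ≤ d / 2 ^ k) →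
      |θ - θ'| ≤ A * (d / 2 ^ k) ∧
        ∀ x, |u ((k + 1 : ℕ) * T) x - m (x - θ')| ≤ d / 2 ^ (k + 1) := by
    intro k θ
    by_cases hk : ∀ x, |u (k * T) x - m (x - θ)| ≤ d / 2 ^ k
    · obtain ⟨α, hα, hαx⟩ := hstep _ _ _ _ (d / 2 ^ k)
        (hu.shift (by positivity : 0 ≤ (k : ℝ) * T) θ) (by positivity)
        ((div_le_self hd (one_le_pow₀ one_le_two)).trans hdβ) (hshift k θ hk)
      refine ⟨θ + α, fun _ => ⟨by simpa using hα, fun x => ?_⟩⟩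
      have := hαx (x - θ)
      rw [sub_add_cancel, div_div, ← pow_succ] at this
      rwa [show ((k + 1 : ℕ) : ℝ) * T = T + k * T by push_cast; ring, ← sub_sub]
    · exact ⟨0, fun hk' => absurd hk' hk⟩
  choose f hf using hiter
  set θ : ℕ → ℝ := fun k => Nat.rec θ₀ (fun k θ => f k θ) k with hθ
  have hclose : ∀ k : ℕ, ∀ x, |u (k * T) x - m (x - θ k)| ≤ d / 2 ^ k := by
    intro k
    induction k with
    | zero => simpa [hθ] using hinit
    | succ k ih => exact (hf k (θ k) ih).2
  have hgeom : ∀ k : ℕ, dist (θ k) (θ (k + 1)) ≤ 2 * (A * d) / 2 / 2 ^ k := by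
    intro k
    have := (hf k (θ k) (hclose k)).1
    rw [Real.dist_eq]
    refine this.trans_eq ?_
    ring
  obtain ⟨ζ, hζ⟩ := cauchySeq_tendsto_of_complete (cauchySeq_of_le_geometric_two hgeom)
  have hdist := dist_le_of_le_geometric_two_of_tendsto hgeom hζ
  refine ⟨ζ, fun t ht x => ?_⟩
  set k := ⌊t / T⌋₊ with hk
  have hk1 : k * T ≤ t := by
    rw [← le_div_iff₀ hT]
    exact Nat.floor_le (by positivity)
  have hk2 : t / T < k + 1 := Nat.lt_floor_add_one _
  have hk3 : t < (k + 1) * T := by rwa [div_lt_iff₀ hT] at hk2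
  have hexp : 1 / 2 ^ k ≤ 2 * Real.exp (-(Real.log 2 / T) * t) := by
    have h1 : Real.exp (Real.log 2 / T * t) ≤ 2 ^ (k + 1) := by
      rw [← Real.exp_log (by norm_num : (0 : ℝ) < 2), ← Real.exp_nat_mul,
        Real.exp_log (by norm_num : (0 : ℝ) < 2)]
      refine Real.exp_le_exp.mpr ?_
      rw [div_mul_eq_mul_div, mul_div_assoc, mul_comm]
      push_cast
      exact mul_le_mul_of_nonneg_right hk2.le (Real.log_pos one_lt_two).le
    rw [neg_mul, Real.exp_neg, div_le_iff₀ (by positivity)]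
    have h2 := Real.exp_pos (Real.log 2 / T * t)
    have h3 : Real.exp (Real.log 2 / T * t) * (Real.exp (Real.log 2 / T * t))⁻¹ = 1 :=
      mul_inv_cancel₀ h2.ne'
    have h4 := mul_le_mul_of_nonneg_right h1 (inv_pos.mpr h2).le
    rw [pow_succ] at h4
    linarith
  have h1 : |u t x - m (x - θ k)| ≤ d / 2 ^ k * Real.exp T := by
    have := h.abs_sub_le_mul_exp (hu.shift (by positivity : 0 ≤ (k : ℝ) * T) (θ k))
      (by positivity) (hshift k (θ k) (hclose k)) (t - k * T) (by linarith) (x - θ k)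
    rw [sub_add_cancel, sub_add_cancel] at this
    refine this.trans ?_
    gcongr
    linarith
  have h2 : |m (x - θ k) - m (x - ζ)| ≤ 2 * (A * d) / 2 ^ k := by
    refine (h.abs_sub_le _ _).trans ?_
    rw [sub_sub_sub_cancel_left, abs_sub_comm]
    exact hdist k
  calc |u t x - m (x - ζ)| ≤ |u t x - m (x - θ k)| + |m (x - θ k) - m (x - ζ)| :=
        _root_.abs_sub_le _ _ _
    _ ≤ d / 2 ^ k * Real.exp T + 2 * (A * d) / 2 ^ k := add_le_add h1 h2
    _ = (Real.exp T + 2 * A) * d * (1 / 2 ^ k) := by ring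
    _ ≤ (Real.exp T + 2 * A) * d * (2 * Real.exp (-(Real.log 2 / T) * t)) := by gcongr
    _ = _ := by ring

/-- Two translates approached by the same function along `atTop` coincide. -/
theorem phase_unique (h : IsStandingWave n m) {u : ℝ → ℝ → ℝ} {c D D' ζ ζ' : ℝ} (hc : 0 < c)
    (h1 : ∀ t, 0 ≤ t → ∀ x, |u t x - m (x - ζ)| ≤ Real.exp (-c * t) * D)
    (h2 : ∀ t, 0 ≤ t → ∀ x, |u t x - m (x - ζ')| ≤ Real.exp (-c * t) * D') : ζ = ζ' := by
  have hexp : Tendsto (fun t => Real.exp (-c * t)) atTop (nhds 0) :=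
    Real.tendsto_exp_atBot.comp (tendsto_id.const_mul_atTop_of_neg (neg_lt_zero.mpr hc))
  have hlim : ∀ E η : ℝ, (∀ t, 0 ≤ t → ∀ x, |u t x - m (x - η)| ≤ Real.exp (-c * t) * E) →
      Tendsto (fun t => u t 0) atTop (nhds (m (0 - η))) := by
    intro E η hη
    rw [tendsto_iff_dist_tendsto_zero]
    refine squeeze_zero' (Eventually.of_forall fun _ => dist_nonneg)
      (eventually_ge_atTop 0 |>.mono fun t ht => hη t ht 0) ?_
    simpa using hexp.mul_const E
  have := h.strictMono.injective (tendsto_nhds_unique (hlim D ζ h1) (hlim D' ζ' h2))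
  linarith

end IsStandingWave

/-- Exponential convergence of the deterministic Allen–Cahn flow to the manifold of
traveling waves, for initial data `L^∞`-close to the manifold. -/
theorem stmt_2 (n : ℕ) (hn : 1 ≤ n) (m : ℝ → ℝ)
    (hm : ContDiff ℝ 2 m) (hmono : StrictMono m)
    (heq : ∀ x : ℝ, deriv (deriv m) x + m x - m x ^ (2 * n + 1) = 0)
    (h0 : m 0 = 0)
    (htop : Tendsto m atTop (nhds 1))
    (hbot : Tendsto m atBot (nhds (-1))) :
    ∃ β > (0:ℝ), ∃ c > (0:ℝ), ∃ C > (0:ℝ),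
      ∀ (v : ℝ → ℝ) (u ut ux uxx : ℝ → ℝ → ℝ),
        Continuous v → (∃ M : ℝ, ∀ x : ℝ, |v x| ≤ M) →
        (⨅ θ : ℝ, ⨆ x : ℝ, |v x - m (x - θ)|) < β →
        ContinuousOn (fun p : ℝ × ℝ => u p.1 p.2) {p : ℝ × ℝ | 0 ≤ p.1} →
        (∀ T > (0:ℝ), ∃ M : ℝ, ∀ t ∈ Set.Icc (0:ℝ) T, ∀ x : ℝ, |u t x| ≤ M) →
        (∀ x : ℝ, u 0 x = v x) →
        ContinuousOn (fun p : ℝ × ℝ => ut p.1 p.2) {p : ℝ × ℝ | 0 < p.1} →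
        ContinuousOn (fun p : ℝ × ℝ => ux p.1 p.2) {p : ℝ × ℝ | 0 < p.1} →
        ContinuousOn (fun p : ℝ × ℝ => uxx p.1 p.2) {p : ℝ × ℝ | 0 < p.1} →
        (∀ t : ℝ, 0 < t → ∀ x : ℝ,
          HasDerivAt (fun s => u s x) (ut t x) t ∧
          HasDerivAt (fun y => u t y) (ux t x) x ∧
          HasDerivAt (fun y => ux t y) (uxx t x) x ∧
          ut t x = uxx t x + u t x - u t x ^ (2 * n + 1)) →
        ∃ ζ : ℝ, ∀ t : ℝ, 0 ≤ t →
          (⨆ x : ℝ, |u t x - m (x - ζ)|)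
            ≤ C * Real.exp (-c * t) * ⨅ θ : ℝ, ⨆ x : ℝ, |v x - m (x - θ)| := by
  have h : IsStandingWave n m := ⟨hn, hm, hmono, heq, htop, hbot⟩
  obtain ⟨β, hβ, c, hc, C, hC, hconv⟩ := h.exists_convergence
  refine ⟨β, hβ, c, hc, C, hC, ?_⟩
  intro v u ut ux uxx _ hvb hdist hucont hub hu0 _ _ _ hpde
  have hu : IsHeatSolution u ut ux uxx fun t x => u t x - u t x ^ (2 * n + 1) :=
    ⟨hucont, hub, fun t ht x => (hpde t ht x).1, fun t ht x => (hpde t ht x).2.1,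
      fun t ht x => (hpde t ht x).2.2.1, fun t ht x => by rw [(hpde t ht x).2.2.2]; ring⟩
  set δ := ⨅ θ : ℝ, ⨆ x : ℝ, |v x - m (x - θ)| with hδ
  have hδ0 : 0 ≤ δ := Real.iInf_nonneg fun θ => Real.iSup_nonneg fun x => abs_nonneg _
  obtain ⟨M, hM⟩ := hvb
  have hbdd : ∀ θ, BddAbove (Set.range fun x => |v x - m (x - θ)|) := by
    refine fun θ => ⟨M + 1, ?_⟩
    rintro _ ⟨x, rfl⟩
    exact (abs_sub _ _).trans (add_le_add (hM x) (h.abs_le_one _))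
  have hphase : ∀ d, δ < d → d ≤ β →
      ∃ ζ, ∀ t, 0 ≤ t → ∀ x, |u t x - m (x - ζ)| ≤ C * Real.exp (-c * t) * d := by
    intro d hd hdβ
    obtain ⟨θ, hθ⟩ := exists_lt_of_ciInf_lt hd
    refine hconv u ut ux uxx d θ hu (hδ0.trans hd.le) hdβ fun x => ?_
    rw [hu0 x]
    exact (le_ciSup (hbdd θ) x).trans hθ.le
  obtain ⟨ζ, hζ⟩ := hphase β hdist le_rfl
  refine ⟨ζ, fun t ht => ciSup_le fun x => ?_⟩
  have hpos : 0 < C * Real.exp (-c * t) := by positivity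
  rw [mul_comm, ← div_le_iff₀ hpos]
  refine le_of_forall_gt_imp_ge_of_dense fun a ha => ?_
  obtain ⟨ζ', hζ'⟩ := hphase (min a β) (lt_min ha hdist) (min_le_right _ _)
  have hEq : ζ = ζ' := h.phase_unique (D := C * β) (D' := C * min a β) hc
    (fun t ht x => (hζ t ht x).trans_eq (by ring)) (fun t ht x => (hζ' t ht x).trans_eq (by ring))
  rw [div_le_iff₀ hpos, hEq, mul_comm]
  exact (hζ' t ht x).trans (mul_le_mul_of_nonneg_left (min_le_left _ _) hpos.le)
end

section
/- Let n ≥ 1 be an integer and let m : ℝ → ℝ be the unique increasing solution of m'' + m − m^{2n+1} = 0 with m(0) = 0 and m(x) → ±1 as x → ±∞. There exist constants β, C > 0 such that: for every bounded measurable v : ℝ → ℝ with inf_{θ∈ℝ} sup_{x∈ℝ} |v(x) − m(x−θ)| < β, there exists a unique ℓ ∈ ℝ such that ∫_ℝ v(y)·m'(y − ℓ) dy = 0; moreover, whenever θ ∈ ℝ satisfies sup_{x∈ℝ} |v(x) − m(x−θ)| < β, one has |ℓ − θ| ≤ C·sup_{x∈ℝ} |v(x) − m(x−θ)|. -/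
open Filter MeasureTheory

/-- The `L¹` modulus of continuity of translations of a `C¹` function is controlled by the
`L¹` norm of its derivative. -/
lemma integral_abs_translate_sub_le {f : ℝ → ℝ} (hf : ContDiff ℝ 1 f) (hfi : Integrable f)
    (hf' : Integrable (deriv f)) {a b : ℝ} (hab : a ≤ b) :
    ∫ y, |f (y - a) - f (y - b)| ≤ (b - a) * ∫ y, |deriv f y| := by
  have hd : Differentiable ℝ f := hf.differentiable (by norm_num)
  have hc : Continuous (deriv f) := hf.continuous_deriv (by norm_num)
  have hint : Integrable (fun y => f (y - a) - f (y - b)) :=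
    (hfi.comp_sub_right a).sub (hfi.comp_sub_right b)
  have hpt : ∀ y, ‖f (y - a) - f (y - b)‖ₑ ≤ ∫⁻ t in Set.Ioc a b, ‖deriv f (y - t)‖ₑ := by
    intro y
    have h1 : ∫ t in a..b, deriv f (y - t) = f (y - a) - f (y - b) := by
      rw [intervalIntegral.integral_comp_sub_left (fun t => deriv f t) y,
        intervalIntegral.integral_deriv_eq_sub (fun x _ => hd x) (hc.intervalIntegrable _ _)]
    rw [← h1, intervalIntegral.integral_of_le hab]
    exact enorm_integral_le_lintegral_enorm _
  have hswap : ∫⁻ y, ‖f (y - a) - f (y - b)‖ₑ ≤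
      ENNReal.ofReal (b - a) * ∫⁻ y, ‖deriv f y‖ₑ := by
    calc ∫⁻ y, ‖f (y - a) - f (y - b)‖ₑ
        ≤ ∫⁻ y, ∫⁻ t in Set.Ioc a b, ‖deriv f (y - t)‖ₑ := lintegral_mono hpt
      _ = ∫⁻ t in Set.Ioc a b, ∫⁻ y, ‖deriv f (y - t)‖ₑ := by
          apply lintegral_lintegral_swap
          apply Measurable.aemeasurable
          have : Continuous fun p : ℝ × ℝ => ‖deriv f (p.1 - p.2)‖ₑ := by fun_prop
          exact this.measurable
      _ = ∫⁻ t in Set.Ioc a b, ∫⁻ y, ‖deriv f y‖ₑ := by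
          refine lintegral_congr fun t => ?_
          exact lintegral_sub_right_eq_self (fun y => ‖deriv f y‖ₑ) t
      _ = ENNReal.ofReal (b - a) * ∫⁻ y, ‖deriv f y‖ₑ := by
          rw [setLIntegral_const, Real.volume_Ioc, mul_comm]
  have e1 : ∫ y, |f (y - a) - f (y - b)| = (∫⁻ y, ‖f (y - a) - f (y - b)‖ₑ).toReal :=
    integral_norm_eq_lintegral_enorm hint.aestronglyMeasurable
  have e2 : ∫ y, |deriv f y| = (∫⁻ y, ‖deriv f y‖ₑ).toReal :=
    integral_norm_eq_lintegral_enorm hf'.aestronglyMeasurable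
  rw [e1, e2]
  calc _ ≤ (ENNReal.ofReal (b - a) * ∫⁻ y, ‖deriv f y‖ₑ).toReal :=
        ENNReal.toReal_mono (ENNReal.mul_ne_top ENNReal.ofReal_ne_top hf'.2.ne) hswap
    _ = _ := by rw [ENNReal.toReal_mul, ENNReal.toReal_ofReal (by linarith)]

/-- A differentiable function that increases on `(-∞, a]` and converges at `-∞` has integrable
derivative on `(-∞, a]`. -/
lemma integrableOn_Iic_deriv_of_nonneg_of_tendsto {f : ℝ → ℝ} {a l : ℝ}
    (hd : Differentiable ℝ f) (hf : ∀ x < a, 0 ≤ deriv f x) (hl : Tendsto f atBot (nhds l)) :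
    IntegrableOn (deriv f) (Set.Iic a) := by
  have h1 : IntegrableOn (fun x => -deriv f (-x)) (Set.Ioi (-a)) := by
    refine integrableOn_Ioi_deriv_of_nonpos (g := fun x => f (-x)) (l := l)
      (hd.continuous.comp continuous_neg).continuousWithinAt (fun x _ => ?_) (fun x hx => ?_)
      (hl.comp tendsto_neg_atTop_atBot)
    · exact ((hd (-x)).hasDerivAt.comp x (hasDerivAt_neg x)).congr_deriv (by simp)
    · exact neg_nonpos.2 (hf _ (neg_lt.1 hx))
  rw [integrableOn_Iic_iff_integrableOn_Iio]
  simpa using h1.neg.comp_neg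

/-- A monotone differentiable profile connecting `-1` to `1` has integrable derivative of mass `2`. -/
lemma integrable_deriv_of_front {m : ℝ → ℝ} (hd : Differentiable ℝ m) (hmono : Monotone m)
    (htop : Tendsto m atTop (nhds 1)) (hbot : Tendsto m atBot (nhds (-1))) :
    Integrable (deriv m) ∧ ∫ y, deriv m y = 2 := by
  have hi : Integrable (deriv m) := by
    rw [← integrableOn_univ, ← Set.Iic_union_Ioi (a := (0 : ℝ))]
    refine IntegrableOn.union ?_ ?_
    · exact integrableOn_Iic_deriv_of_nonneg_of_tendsto hd (fun x _ => hmono.deriv_nonneg) hbot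
    · exact integrableOn_Ioi_deriv_of_nonneg (hd 0).continuousAt.continuousWithinAt
        (fun x _ => (hd x).hasDerivAt) (fun x _ => hmono.deriv_nonneg) htop
  refine ⟨hi, ?_⟩
  rw [integral_of_hasDerivAt_of_tendsto (fun x => (hd x).hasDerivAt) hi hbot htop]
  norm_num

/-- The derivative of a nonnegative function that increases on `(-∞, 0]` and decreases on
`[0, ∞)` is integrable. -/
lemma integrable_deriv_of_unimodal {f : ℝ → ℝ} (hf : ContDiff ℝ 1 f) (h0 : ∀ x, 0 ≤ f x)
    (hneg : ∀ x < 0, 0 ≤ deriv f x) (hpos : ∀ x > 0, deriv f x ≤ 0) :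
    Integrable (deriv f) := by
  have hd : Differentiable ℝ f := hf.differentiable (by norm_num)
  have hanti : AntitoneOn f (Set.Ici 0) :=
    antitoneOn_of_deriv_nonpos (convex_Ici 0) hd.continuous.continuousOn
      hd.differentiableOn (by simpa using hpos)
  have hmon : MonotoneOn f (Set.Iic 0) :=
    monotoneOn_of_deriv_nonneg (convex_Iic 0) hd.continuous.continuousOn
      hd.differentiableOn (by simpa using hneg)
  have ht : ∃ l, Tendsto f atTop (nhds l) := by
    have h1 : Antitone fun x => f (max 0 x) := fun x y hxy =>
      hanti (le_max_left 0 x) (le_max_left 0 y) (max_le_max le_rfl hxy)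
    refine ⟨_, (tendsto_atTop_ciInf h1 ⟨0, ?_⟩).congr' ?_⟩
    · rintro _ ⟨x, rfl⟩
      exact h0 _
    · filter_upwards [eventually_ge_atTop 0] with x hx
      rw [max_eq_right hx]
  have hb : ∃ l, Tendsto f atBot (nhds l) := by
    have h1 : Monotone fun x => f (min 0 x) := fun x y hxy =>
      hmon (min_le_left 0 x) (min_le_left 0 y) (min_le_min le_rfl hxy)
    refine ⟨_, (tendsto_atBot_ciInf h1 ⟨0, ?_⟩).congr' ?_⟩
    · rintro _ ⟨x, rfl⟩
      exact h0 _
    · filter_upwards [eventually_le_atBot 0] with x hx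
      rw [min_eq_right hx]
  obtain ⟨l, hl⟩ := ht
  obtain ⟨k, hk⟩ := hb
  rw [← integrableOn_univ, ← Set.Iic_union_Ioi (a := (0 : ℝ))]
  exact (integrableOn_Iic_deriv_of_nonneg_of_tendsto hd hneg hk).union
    (integrableOn_Ioi_deriv_of_nonpos (hd 0).continuousAt.continuousWithinAt
      (fun x _ => (hd x).hasDerivAt) hpos hl)

lemma integrable_mul_of_abs_le {u f : ℝ → ℝ} {M : ℝ} (hu : Measurable u) (hM : ∀ x, |u x| ≤ M)
    (hf : Integrable f) : Integrable fun y => u y * f y :=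
  hf.bdd_mul hu.aestronglyMeasurable (Eventually.of_forall hM)

lemma abs_integral_mul_le {u f : ℝ → ℝ} {M : ℝ} (hu : Measurable u) (hM : ∀ x, |u x| ≤ M)
    (hf : Integrable f) : |∫ y, u y * f y| ≤ M * ∫ y, |f y| := by
  calc |∫ y, u y * f y| ≤ ∫ y, |u y * f y| := abs_integral_le_integral_abs
    _ ≤ ∫ y, M * |f y| := by
        refine integral_mono (integrable_mul_of_abs_le hu hM hf).abs (hf.abs.const_mul M)
          fun y => ?_
        simp only [abs_mul]
        exact mul_le_mul_of_nonneg_right (hM y) (abs_nonneg _)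
    _ = M * ∫ y, |f y| := integral_const_mul _ _

/-- The self-correlation `s ↦ ∫ m · m'(· - s)` of a front vanishes at `0`, is monotone, and
grows at least linearly near `0`. -/
lemma front_correlation {m : ℝ → ℝ} (hm : ContDiff ℝ 1 m) (hmono : StrictMono m)
    (hb : ∀ x, |m x| ≤ 1)
    (htop : Tendsto m atTop (nhds 1)) (hbot : Tendsto m atBot (nhds (-1))) :
    (∫ y, m y * deriv m (y - 0)) = 0 ∧
    Monotone (fun s => ∫ y, m y * deriv m (y - s)) ∧
    ∃ r > (0 : ℝ), ∃ c > (0 : ℝ), ∀ s t, -r ≤ s → s ≤ t → t ≤ r →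
      c * (t - s) ≤ (∫ y, m y * deriv m (y - t)) - ∫ y, m y * deriv m (y - s) := by
  have hd : Differentiable ℝ m := hm.differentiable (by norm_num)
  have hc : Continuous (deriv m) := hm.continuous_deriv (by norm_num)
  obtain ⟨hi, -⟩ := integrable_deriv_of_front hd hmono.monotone htop hbot
  have hw : ∀ x, 0 ≤ deriv m x := fun x => hmono.monotone.deriv_nonneg
  have hshift : ∀ s, ∫ y, m y * deriv m (y - s) = ∫ y, m (y + s) * deriv m y := by
    intro s
    rw [← integral_add_right_eq_self (fun y => m y * deriv m (y - s)) s]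
    simp
  have hint : ∀ s, Integrable fun y => m (y + s) * deriv m y := fun s =>
    integrable_mul_of_abs_le (hd.continuous.comp (continuous_add_const s)).measurable
      (fun x => hb _) hi
  have hdiff : ∀ s t, (∫ y, m y * deriv m (y - t)) - ∫ y, m y * deriv m (y - s) =
      ∫ y, (m (y + t) - m (y + s)) * deriv m y := by
    intro s t
    rw [hshift, hshift, ← integral_sub (hint t) (hint s)]
    simp only [sub_mul]
  have hdint : ∀ s t, Integrable fun y => (m (y + t) - m (y + s)) * deriv m y := by
    intro s t
    simp only [sub_mul]
    exact (hint t).sub (hint s)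
  have hnn : ∀ s t, s ≤ t → ∀ y, 0 ≤ (m (y + t) - m (y + s)) * deriv m y := fun s t hst y =>
    mul_nonneg (sub_nonneg.2 (hmono.monotone (by linarith))) (hw y)
  refine ⟨?_, ?_, ?_⟩
  · have h2 : Integrable fun y => m y * deriv m y := by simpa using hint 0
    have := integral_of_hasDerivAt_of_tendsto (f := fun x => m x ^ 2 / 2)
      (f' := fun y => m y * deriv m y) (m := (-1) ^ 2 / 2) (n := 1 ^ 2 / 2)
      (fun x => (((hd x).hasDerivAt.pow 2).div_const 2).congr_deriv (by simp; ring)) h2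
      ((hbot.pow 2).div_const 2) ((htop.pow 2).div_const 2)
    simp only [sub_zero]
    rw [this]
    norm_num
  · intro s t hst
    have := integral_nonneg (μ := volume)
      (f := fun y => (m (y + t) - m (y + s)) * deriv m y) (hnn s t hst)
    rw [← hdiff] at this
    exact sub_nonneg.1 this
  · obtain ⟨p, hp⟩ : ∃ p, 0 < deriv m p := by
      by_contra! h
      have := is_const_of_deriv_eq_zero hd (fun x => le_antisymm (h x) (hw x)) 0 1
      exact absurd this (hmono zero_lt_one).ne
    obtain ⟨ε, hε, hball⟩ := Metric.eventually_nhds_iff.1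
      ((hc.tendsto p).eventually (lt_mem_nhds (half_lt_self hp)))
    set r := ε / 4 with hr
    have hr0 : 0 < r := by positivity
    have hlow : ∀ x, p - 2 * r ≤ x → x ≤ p + 2 * r → deriv m p / 2 ≤ deriv m x := by
      intro x h1 h2
      refine (hball ?_).le
      rw [Real.dist_eq, abs_lt]
      constructor <;> linarith
    have hgain : 0 < m (p + r) - m p := sub_pos.2 (hmono (by linarith))
    refine ⟨r, hr0, deriv m p / 2 * (m (p + r) - m p), by positivity, ?_⟩
    intro s t hs hst ht
    rw [hdiff]
    have hinc : ∀ y, p ≤ y → y ≤ p + r →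
        deriv m p / 2 * (t - s) ≤ m (y + t) - m (y + s) := by
      intro y h1 h2
      have := (convex_Icc (p - 2 * r) (p + 2 * r)).mul_sub_le_image_sub_of_le_deriv
        hd.continuous.continuousOn hd.differentiableOn (C := deriv m p / 2)
        (fun x hx => by
          have := interior_subset hx
          exact hlow x this.1 this.2)
        (y + s) ⟨by linarith, by linarith⟩ (y + t) ⟨by linarith, by linarith⟩ (by linarith)
      simpa using this
    calc deriv m p / 2 * (m (p + r) - m p) * (t - s)
        = ∫ y in Set.Ioc p (p + r), deriv m p / 2 * (t - s) * deriv m y := by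
          rw [integral_const_mul, ← intervalIntegral.integral_of_le (by linarith),
            intervalIntegral.integral_deriv_eq_sub (fun x _ => hd x)
              (hc.intervalIntegrable _ _)]
          ring
      _ ≤ ∫ y in Set.Ioc p (p + r), (m (y + t) - m (y + s)) * deriv m y := by
          refine setIntegral_mono_on (hi.const_mul _).integrableOn (hdint s t).integrableOn
            measurableSet_Ioc fun y hy => ?_
          exact mul_le_mul_of_nonneg_right (hinc y hy.1.le hy.2) (hw y)
      _ ≤ ∫ y, (m (y + t) - m (y + s)) * deriv m y :=
          setIntegral_le_integral (hdint s t) (Eventually.of_forall (hnn s t hst))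

/-- Existence, uniqueness and Lipschitz-type stability of the Fermi coordinate (linear
center) `ℓ(v)` for `v` close to the manifold of traveling waves. -/
theorem stmt_3 (n : ℕ) (hn : 1 ≤ n) (m : ℝ → ℝ)
    (hm : ContDiff ℝ 2 m) (hmono : StrictMono m)
    (heq : ∀ x : ℝ, deriv (deriv m) x + m x - m x ^ (2 * n + 1) = 0)
    (h0 : m 0 = 0)
    (htop : Tendsto m atTop (nhds 1))
    (hbot : Tendsto m atBot (nhds (-1))) :
    ∃ β > (0:ℝ), ∃ C > (0:ℝ),
      ∀ v : ℝ → ℝ, Measurable v → (∃ M : ℝ, ∀ x : ℝ, |v x| ≤ M) →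
        (⨅ θ : ℝ, ⨆ x : ℝ, |v x - m (x - θ)|) < β →
        ∃ ℓ : ℝ, (∫ y : ℝ, v y * deriv m (y - ℓ)) = 0 ∧
          (∀ ℓ' : ℝ, (∫ y : ℝ, v y * deriv m (y - ℓ')) = 0 → ℓ' = ℓ) ∧
          (∀ θ : ℝ, (⨆ x : ℝ, |v x - m (x - θ)|) < β →
            |ℓ - θ| ≤ C * ⨆ x : ℝ, |v x - m (x - θ)|) := by
  have hm1 : ContDiff ℝ 1 m := hm.of_le (by norm_num)
  have hw1 : ContDiff ℝ 1 (deriv m) := ((contDiff_succ_iff_deriv (n := 1)).1 hm).2.2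
  have hd : Differentiable ℝ m := hm1.differentiable (by norm_num)
  have hb : ∀ x, |m x| ≤ 1 := fun x => abs_le.2
    ⟨hmono.monotone.le_of_tendsto hbot x, hmono.monotone.ge_of_tendsto htop x⟩
  have hw : ∀ x, 0 ≤ deriv m x := fun x => hmono.monotone.deriv_nonneg
  obtain ⟨hi, hmass⟩ := integrable_deriv_of_front hd hmono.monotone htop hbot
  have hode : ∀ x, deriv (deriv m) x = - (m x * (1 - (m x ^ 2) ^ n)) := by
    intro x
    have := heq x
    rw [← pow_mul]
    linear_combination this
  have hfac : ∀ x, 0 ≤ 1 - (m x ^ 2) ^ n := fun x =>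
    sub_nonneg.2 (pow_le_one₀ (sq_nonneg _) ((sq_le_one_iff_abs_le_one _).2 (hb x)))
  have hw'i : Integrable (deriv (deriv m)) := by
    refine integrable_deriv_of_unimodal hw1 hw (fun x hx => ?_) (fun x hx => ?_)
    · have : m x ≤ 0 := h0 ▸ (hmono hx).le
      rw [hode]
      exact neg_nonneg.2 (mul_nonpos_of_nonpos_of_nonneg this (hfac x))
    · have : 0 ≤ m x := h0 ▸ (hmono hx).le
      rw [hode]
      exact neg_nonpos.2 (mul_nonneg this (hfac x))
  obtain ⟨hg0, hgmono, r, hr, c, hc, hgr⟩ := front_correlation hm1 hmono hb htop hbot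
  set g : ℝ → ℝ := fun s => ∫ y, m y * deriv m (y - s) with hg
  have hg0 : g 0 = 0 := hg0
  have hgr : ∀ s t, -r ≤ s → s ≤ t → t ≤ r → c * (t - s) ≤ g t - g s := hgr
  set K := ∫ y, |deriv (deriv m) y| with hK
  have hK0 : 0 ≤ K := integral_nonneg fun _ => abs_nonneg _
  have hlip : ∀ (u : ℝ → ℝ) (M a b : ℝ), Measurable u → (∀ x, |u x| ≤ M) → a ≤ b →
      |(∫ y, u y * deriv m (y - a)) - ∫ y, u y * deriv m (y - b)| ≤ M * (K * (b - a)) := by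
    intro u M a b hu hM hab
    rw [← integral_sub (integrable_mul_of_abs_le hu hM (hi.comp_sub_right a))
      (integrable_mul_of_abs_le hu hM (hi.comp_sub_right b))]
    simp only [← mul_sub]
    refine (abs_integral_mul_le hu hM
      ((hi.comp_sub_right a).sub (hi.comp_sub_right b))).trans ?_
    rw [mul_comm K]
    exact mul_le_mul_of_nonneg_left (integral_abs_translate_sub_le hw1 hi hw'i hab)
      ((abs_nonneg _).trans (hM 0))
  refine ⟨min (c * r / 2) (c / (K + 1)), by positivity, 2 / c, by positivity, ?_⟩
  rintro v hv ⟨M, hM⟩ hinf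
  obtain ⟨θ₀, hθ₀⟩ := exists_lt_of_ciInf_lt hinf
  set G : ℝ → ℝ := fun s => ∫ y, v y * deriv m (y - s) with hG
  change ∃ ℓ, G ℓ = 0 ∧ (∀ ℓ', G ℓ' = 0 → ℓ' = ℓ) ∧ _
  set δ : ℝ → ℝ := fun θ => ⨆ x, |v x - m (x - θ)| with hδ
  have hδle : ∀ θ x, |v x - m (x - θ)| ≤ δ θ := by
    intro θ x
    refine le_ciSup (f := fun x => |v x - m (x - θ)|) ⟨M + 1, ?_⟩ x
    rintro _ ⟨y, rfl⟩
    exact (abs_sub _ _).trans (add_le_add (hM y) (hb _))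
  have hδ0 : ∀ θ, 0 ≤ δ θ := fun θ => (abs_nonneg _).trans (hδle θ 0)
  have hmm : ∀ θ, Measurable fun x => m (x - θ) := fun θ =>
    (hd.continuous.comp (continuous_id.sub continuous_const)).measurable
  have hsplit : ∀ θ ℓ, G ℓ = g (ℓ - θ) + ∫ y, (v y - m (y - θ)) * deriv m (y - ℓ) := by
    intro θ ℓ
    have h1 : g (ℓ - θ) = ∫ y, m (y - θ) * deriv m (y - ℓ) := by
      simp only [hg]
      rw [← integral_sub_right_eq_self (fun y => m y * deriv m (y - (ℓ - θ))) θ]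
      simp only [sub_sub, add_sub_cancel]
    have hφ : Measurable fun x => v x - m (x - θ) := hv.sub (hmm θ)
    rw [h1, ← integral_add
      (integrable_mul_of_abs_le (hmm θ) (fun x => hb _) (hi.comp_sub_right ℓ))
      (integrable_mul_of_abs_le hφ (hδle θ) (hi.comp_sub_right ℓ))]
    simp only [hG]
    congr 1 with y
    ring
  have hclose : ∀ θ ℓ, |G ℓ - g (ℓ - θ)| ≤ 2 * δ θ := by
    intro θ ℓ
    rw [hsplit θ ℓ, add_sub_cancel_left]
    refine (abs_integral_mul_le (hv.sub (hmm θ)) (hδle θ) (hi.comp_sub_right ℓ)).trans ?_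
    simp only [abs_of_nonneg (hw _)]
    rw [integral_sub_right_eq_self (fun y => deriv m y) ℓ, hmass, mul_comm]
  have hgpos : c * r ≤ g r := by simpa [hg0] using hgr 0 r (by linarith) hr.le le_rfl
  have hgneg : g (-r) ≤ -(c * r) := by
    have := hgr (-r) 0 le_rfl (by linarith) hr.le
    rw [hg0] at this
    linarith
  have hzero : ∀ θ ℓ, δ θ < min (c * r / 2) (c / (K + 1)) → G ℓ = 0 → |ℓ - θ| < r := by
    intro θ ℓ hθ hℓ
    have hs := (lt_min_iff.1 hθ).1
    have h1 := abs_le.1 (hclose θ ℓ)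
    rw [hℓ] at h1
    rw [abs_lt]
    constructor
    · by_contra! h
      have := hgmono h
      linarith
    · by_contra! h
      have := hgmono h
      linarith
  have hGcont : Continuous G := by
    refine LipschitzWith.continuous (K := (M * K).toNNReal)
      (LipschitzWith.of_dist_le_mul fun a b => ?_)
    have hM0 : 0 ≤ M := (abs_nonneg _).trans (hM 0)
    rw [Real.coe_toNNReal _ (by positivity), Real.dist_eq, Real.dist_eq, mul_assoc]
    rcases le_total a b with h | h
    · rw [abs_sub_comm a b, abs_of_nonneg (sub_nonneg.2 h)]
      exact hlip v M a b hv hM h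
    · rw [abs_sub_comm (G a), abs_of_nonneg (sub_nonneg.2 h)]
      exact hlip v M b a hv hM h
  have hGstrict : ∀ a b, -r ≤ a - θ₀ → a < b → b - θ₀ ≤ r → G a < G b := by
    intro a b ha hab hbr
    have h1 := hgr (a - θ₀) (b - θ₀) ha (by linarith) hbr
    have h2 := (abs_le.1 (hlip _ _ a b (hv.sub (hmm θ₀)) (hδle θ₀) hab.le)).2
    simp only [Pi.sub_apply] at h2
    have h3 : δ θ₀ * (K + 1) < c := (lt_div_iff₀ (by positivity)).1 (lt_min_iff.1 hθ₀).2
    have h4 : δ θ₀ * (K * (b - a)) < c * (b - a) := by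
      have hδK : δ θ₀ * K < c := by nlinarith [hδ0 θ₀]
      rw [← mul_assoc]
      exact mul_lt_mul_of_pos_right hδK (sub_pos.2 hab)
    rw [hsplit θ₀ a, hsplit θ₀ b]
    linarith
  obtain ⟨ℓ, -, hℓ⟩ : ∃ ℓ ∈ Set.Icc (θ₀ - r) (θ₀ + r), G ℓ = 0 := by
    have hs : δ θ₀ < c * r / 2 := (lt_min_iff.1 hθ₀).1
    have h1 := abs_le.1 (hclose θ₀ (θ₀ - r))
    have h2 := abs_le.1 (hclose θ₀ (θ₀ + r))
    rw [show θ₀ - r - θ₀ = -r by ring] at h1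
    rw [show θ₀ + r - θ₀ = r by ring] at h2
    exact intermediate_value_Icc (by linarith) hGcont.continuousOn
      ⟨by linarith, by linarith⟩
  refine ⟨ℓ, hℓ, fun ℓ' hℓ' => ?_, fun θ hθ => ?_⟩
  · have h1 := abs_lt.1 (hzero θ₀ ℓ hθ₀ hℓ)
    have h2 := abs_lt.1 (hzero θ₀ ℓ' hθ₀ hℓ')
    rcases lt_trichotomy ℓ' ℓ with h | h | h
    · have := hGstrict ℓ' ℓ h2.1.le h h1.2.le
      linarith
    · exact h
    · have := hGstrict ℓ ℓ' h1.1.le h h2.2.le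
      linarith
  · change |ℓ - θ| ≤ 2 / c * δ θ
    have h1 := abs_lt.1 (hzero θ ℓ hθ hℓ)
    have h2 := abs_le.1 (hclose θ ℓ)
    rw [hℓ] at h2
    rw [div_mul_eq_mul_div, le_div_iff₀ hc]
    rcases le_total 0 (ℓ - θ) with h | h
    · have := hgr 0 (ℓ - θ) (by linarith) h h1.2.le
      rw [abs_of_nonneg h]
      linarith
    · have := hgr (ℓ - θ) 0 h1.1.le h hr.le
      rw [abs_of_nonpos h]
      linarith
end
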